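/- arXiv:math/0210228 — 2 statements merged into one kernel-verified Lean document; each statement's English description precedes it below -/
import Mathlib

section
/- Let p > 2, let 𝒫 and 𝒬 be families of partition–weight pairs on countable sets A and B respectively, each satisfying the envelope property, let X = X(𝒫), Y = X(𝒬) with natural coordinate bases (x_a)_{a∈A} and (y_b)_{b∈B}, and let S : X → L_p([0,1]) and T : Y → L_p([0,1]) be bounded linear maps that are bounded below. Then there is a constant C' > 0 such that for every partition R of A×B and every choice, for each r ∈ R, of pairs (P_r,(w_{r,a})) ∈ 𝒫 and (Q_r,(w'_{r,b})) ∈ 𝒬 with the property that r ⊆ p_r × q_r for some p_r ∈ P_r and q_r ∈ Q_r, one has, for all scalars (c_{a,b}) with only finitely many nonzero: ‖Σ_{a,b} c_{a,b} (Sx_a ⊗ Ty_b)‖_{L_p([0,1]²)} ≥ C' (Σ_{r∈R} (Σ_{(a,b)∈r} c_{a,b}² (w_{r,a})² (w'_{r,b})²)^{p/2})^{1/p}. -/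
/-!
Replacing an element of `X(𝒞)` by one with smaller coordinates does not increase its norm, so the
images of the coordinate vectors under an embedding into `L_p` are unconditional. Applying this in
each variable, averaging over independent signs in both variables and using Jensen's inequality
(`p ≥ 2`), the norm of `∑ c_{a,b} Sx_a ⊗ Ty_b` dominates the norm of the square function
`(∑ c_{a,b}² (Sx_a ⊗ Ty_b)²)^{1/2}`. Since `p / 2 ≥ 1`, the `p / 2`-th power of a sum is at least
the sum of the `p / 2`-th powers over disjoint blocks `r`. On one block, contained in a rectangle
`p_r × q_r`, the lower bounds of `S` and `T` turn, by the upper Khintchine inequality, into weighted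
lower estimates for the square functions of `(Sx_a)_{a ∈ p_r}` and `(Ty_b)_{b ∈ q_r}`, which
combine by Tonelli's theorem into a lower estimate for the block.
-/

open scoped ENNReal
open MeasureTheory Filter

noncomputable section

variable {α : Type*}

/-- `P` is a partition of the type `α`: a collection of pairwise disjoint
nonempty subsets of `α` whose union is all of `α`. -/
def IsPartition (P : Set (Set α)) : Prop :=
  (∀ N ∈ P, N.Nonempty) ∧ P.PairwiseDisjoint id ∧ ⋃₀ P = Set.univ

/-- A weight function takes values in `(0,1]`. -/
def IsWeight (W : α → ℝ) : Prop := ∀ a, W a ∈ Set.Ioc (0 : ℝ) 1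

/-- `‖x‖_{P,W} = (Σ_{N∈P} (Σ_{j∈N} x_j² w_j²)^{p/2})^{1/p}`, valued in `[0,∞]`. -/
def pwNorm (p : ℝ) (P : Set (Set α)) (W : α → ℝ) (x : α → ℝ) : ℝ≥0∞ :=
  (∑' N : P, (∑' j : N.1, ENNReal.ofReal ((x j.1) ^ 2 * (W j.1) ^ 2)) ^ (p / 2)) ^ (1 / p)

/-- A partition–weight pair on `α`. -/
abbrev PWPair (α : Type*) := Set (Set α) × (α → ℝ)

/-- Every member of the family is a genuine partition–weight pair. -/
def IsPWFamily (𝒞 : Set (PWPair α)) : Prop :=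
  ∀ PW ∈ 𝒞, IsPartition PW.1 ∧ IsWeight PW.2

/-- `‖x‖_𝒞 = sup_{(P,W) ∈ 𝒞} ‖x‖_{P,W}`. -/
def famNorm (p : ℝ) (𝒞 : Set (PWPair α)) (x : α → ℝ) : ℝ≥0∞ :=
  ⨆ PW ∈ 𝒞, pwNorm p PW.1 PW.2 x

/-- The block of the partition `Q` containing `b` (for a genuine partition this is
the unique element of `Q` containing `b`). -/
def blockOf (Q : Set (Set α)) (b : α) : Set α := ⋃₀ {q ∈ Q | b ∈ q}

/-- The partition `P(Q,T)` obtained from a partition `Q` and a choice `T` of a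
partition–weight pair for each block of `Q`. -/
def envPartition (Q : Set (Set α)) (T : Set α → PWPair α) : Set (Set α) :=
  {K | K.Nonempty ∧ ∃ q ∈ Q, ∃ s ∈ (T q).1, K = q ∩ s}

/-- The weight `W(Q,T)`: on the block `q` of `Q` it is the weight chosen by `T q`. -/
def envWeight (Q : Set (Set α)) (T : Set α → PWPair α) : α → ℝ :=
  fun b => (T (blockOf Q b)).2 b

/-- A family of partition–weight pairs satisfies the envelope property if it is
closed under the operation `(Q, T) ↦ (P(Q,T), W(Q,T))`. -/
def EnvelopeProp (𝒞 : Set (PWPair α)) : Prop :=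
  ∀ Q : Set (Set α), IsPartition Q → ∀ T : Set α → PWPair α, (∀ q ∈ Q, T q ∈ 𝒞) →
    (envPartition Q T, envWeight Q T) ∈ 𝒞

/-- The family `𝒞̃` of all pairs `(P(Q,T), W(Q,T))`. -/
def envFam (𝒞 : Set (PWPair α)) : Set (PWPair α) :=
  {PW | ∃ Q T, IsPartition Q ∧ (∀ q ∈ Q, T q ∈ 𝒞) ∧
    PW = (envPartition Q T, envWeight Q T)}

/-- The envelope norm generated by `𝒞`. -/
def envNorm (p : ℝ) (𝒞 : Set (PWPair α)) (x : α → ℝ) : ℝ≥0∞ := famNorm p (envFam 𝒞) x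

/-- The coordinate basis vector `e_a` of a sequence space on `α`. -/
def coordVec (a : α) : α → ℝ := Set.indicator {a} 1

open scoped NNReal

section Rademacher

variable {ι κ : Type*}

open Classical in
/-- The sign vector that is `1` on `t` and `-1` off `t`. Averages over Rademacher signs on a
finite set `s` are encoded as averages over the subsets `t` of `s`. -/
def signOn (t : Finset ι) (i : ι) : ℝ := if i ∈ t then 1 else -1

lemma signOn_of_mem {t : Finset ι} {i : ι} (h : i ∈ t) : signOn t i = 1 := if_pos h

lemma signOn_of_notMem {t : Finset ι} {i : ι} (h : i ∉ t) : signOn t i = -1 := if_neg h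

lemma nnnorm_signOn (t : Finset ι) (i : ι) : ‖signOn t i‖₊ = 1 := by
  by_cases h : i ∈ t <;> simp [signOn, h]

lemma sum_powerset_insert_signOn {M : Type*} [AddCommMonoid M] [DecidableEq ι] {s : Finset ι}
    {a : ι} (ha : a ∉ s) (u : ι → ℝ) (Φ : ℝ → M) :
    ∑ t ∈ (insert a s).powerset, Φ (∑ i ∈ insert a s, signOn t i * u i) =
      ∑ t ∈ s.powerset,
        (Φ (∑ i ∈ s, signOn t i * u i - u a) + Φ (∑ i ∈ s, signOn t i * u i + u a)) := by
  rw [Finset.sum_powerset_insert ha, ← Finset.sum_add_distrib]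
  refine Finset.sum_congr rfl fun t ht => ?_
  have hat : a ∉ t := fun h => ha (Finset.mem_powerset.1 ht h)
  have sign_insert : ∑ i ∈ s, signOn (insert a t) i * u i = ∑ i ∈ s, signOn t i * u i :=
    Finset.sum_congr rfl fun i hi => by
      have hia : i ≠ a := ne_of_mem_of_not_mem hi ha
      simp [signOn, hia]
  rw [Finset.sum_insert ha, Finset.sum_insert ha, sign_insert, signOn_of_notMem hat,
    signOn_of_mem (Finset.mem_insert_self a t)]
  congr 2 <;> ring

lemma sum_powerset_sum_signOn_sq (s : Finset ι) (u : ι → ℝ) :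
    ∑ t ∈ s.powerset, (∑ i ∈ s, signOn t i * u i) ^ 2 = 2 ^ s.card * ∑ i ∈ s, u i ^ 2 := by
  classical
  induction s using Finset.induction_on with
  | empty => simp
  | insert a s ha ih =>
    have parallelogram (x : ℝ) : (x - u a) ^ 2 + (x + u a) ^ 2 = 2 * x ^ 2 + 2 * u a ^ 2 := by ring
    rw [sum_powerset_insert_signOn ha u fun x => x ^ 2]
    simp only [parallelogram, Finset.sum_add_distrib, ← Finset.mul_sum, ih, Finset.sum_const,
      Finset.card_powerset, Finset.card_insert_of_notMem ha, Finset.sum_insert ha, nsmul_eq_mul]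
    push_cast
    ring

lemma sum_powerset_exp_sum_signOn_le (s : Finset ι) (u : ι → ℝ) :
    ∑ t ∈ s.powerset, Real.exp (∑ i ∈ s, signOn t i * u i) ≤
      2 ^ s.card * Real.exp ((∑ i ∈ s, u i ^ 2) / 2) := by
  classical
  induction s using Finset.induction_on with
  | empty => simp
  | insert a s ha ih =>
    have exp_sub_add_exp_add (x : ℝ) :
        Real.exp (x - u a) + Real.exp (x + u a) = 2 * Real.cosh (u a) * Real.exp x := by
      rw [sub_eq_add_neg, Real.exp_add, Real.exp_add, Real.cosh_eq]
      ring
    simp only [sum_powerset_insert_signOn ha u Real.exp, exp_sub_add_exp_add, ← Finset.mul_sum]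
    calc 2 * Real.cosh (u a) * ∑ t ∈ s.powerset, Real.exp (∑ i ∈ s, signOn t i * u i)
        ≤ 2 * Real.exp (u a ^ 2 / 2) * (2 ^ s.card * Real.exp ((∑ i ∈ s, u i ^ 2) / 2)) := by
          gcongr
          exact Real.cosh_le_exp_half_sq _
      _ = 2 ^ (insert a s).card * Real.exp ((∑ i ∈ insert a s, u i ^ 2) / 2) := by
          rw [Finset.card_insert_of_notMem ha, Finset.sum_insert ha, add_div, Real.exp_add]
          ring

lemma sum_powerset_sum_signOn_mul_signOn_sq (s : Finset ι) (t : Finset κ) (u : ι × κ → ℝ) :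
    ∑ σ ∈ s.powerset ×ˢ t.powerset,
        (∑ x ∈ s ×ˢ t, signOn σ.1 x.1 * signOn σ.2 x.2 * u x) ^ 2 =
      2 ^ s.card * 2 ^ t.card * ∑ x ∈ s ×ˢ t, u x ^ 2 := by
  simp only [Finset.sum_product, mul_assoc, ← Finset.mul_sum]
  rw [Finset.sum_comm]
  simp only [← Finset.mul_sum, sum_powerset_sum_signOn_sq]
  rw [Finset.sum_comm]
  simp only [← Finset.mul_sum, sum_powerset_sum_signOn_sq]

/-- A constant in the upper Khintchine inequality for the exponent `p`. -/
def khintchineConst (p : ℝ) : ℝ≥0 := (2 * p ^ p * Real.exp (1 / 2)).toNNReal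

lemma khintchineConst_pos {p : ℝ} (hp : 0 < p) : 0 < khintchineConst p :=
  Real.toNNReal_pos.2 (by positivity)

lemma abs_rpow_le_exp_add_exp_neg {p : ℝ} (hp : 0 < p) (x : ℝ) :
    |x| ^ p ≤ p ^ p * (Real.exp x + Real.exp (-x)) := by
  have abs_le : |x| ≤ p * Real.exp (|x| / p) := by
    rw [← div_le_iff₀' hp]
    linarith [Real.add_one_le_exp (|x| / p)]
  calc |x| ^ p ≤ (p * Real.exp (|x| / p)) ^ p := by gcongr
    _ = p ^ p * Real.exp |x| := by
        rw [Real.mul_rpow hp.le (Real.exp_pos _).le, ← Real.exp_mul, div_mul_cancel₀ _ hp.ne']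
    _ ≤ p ^ p * (Real.exp x + Real.exp (-x)) := by
        gcongr
        exact Real.exp_abs_le x

lemma sum_powerset_abs_sum_signOn_rpow_le_of_sum_sq_eq_one {p : ℝ} (hp : 0 < p) {s : Finset ι}
    {u : ι → ℝ} (hu : ∑ i ∈ s, u i ^ 2 = 1) :
    ∑ t ∈ s.powerset, |∑ i ∈ s, signOn t i * u i| ^ p ≤ 2 ^ s.card * khintchineConst p := by
  have exp_le := sum_powerset_exp_sum_signOn_le s u
  have exp_neg_le := sum_powerset_exp_sum_signOn_le s (-u)
  simp only [Pi.neg_apply, mul_neg, Finset.sum_neg_distrib, neg_sq, hu] at exp_le exp_neg_le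
  calc ∑ t ∈ s.powerset, |∑ i ∈ s, signOn t i * u i| ^ p
      ≤ ∑ t ∈ s.powerset, p ^ p * (Real.exp (∑ i ∈ s, signOn t i * u i) +
          Real.exp (-∑ i ∈ s, signOn t i * u i)) :=
        Finset.sum_le_sum fun t _ => abs_rpow_le_exp_add_exp_neg hp _
    _ ≤ p ^ p * (2 ^ s.card * Real.exp (1 / 2) + 2 ^ s.card * Real.exp (1 / 2)) := by
        rw [← Finset.mul_sum, Finset.sum_add_distrib]
        gcongr
    _ = 2 ^ s.card * khintchineConst p := by
        rw [khintchineConst, Real.coe_toNNReal _ (by positivity)]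
        ring

lemma sum_powerset_abs_sum_signOn_rpow_le {p : ℝ} (hp : 0 < p) (s : Finset ι) (u : ι → ℝ) :
    ∑ t ∈ s.powerset, |∑ i ∈ s, signOn t i * u i| ^ p ≤
      2 ^ s.card * (khintchineConst p * (∑ i ∈ s, u i ^ 2) ^ (p / 2)) := by
  set V := ∑ i ∈ s, u i ^ 2 with hV
  rcases (show 0 ≤ V by positivity).eq_or_lt with hV0 | hV0
  · have u_eq_zero : ∀ i ∈ s, u i = 0 := fun i hi => by
      simpa using (Finset.sum_eq_zero_iff_of_nonneg fun i _ => sq_nonneg (u i)).1 hV0.symm i hi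
    have sum_eq_zero (t : Finset ι) : ∑ i ∈ s, signOn t i * u i = 0 :=
      Finset.sum_eq_zero fun i hi => by rw [u_eq_zero i hi, mul_zero]
    simp [sum_eq_zero, ← hV0, Real.zero_rpow, hp.ne']
  · have normalized := sum_powerset_abs_sum_signOn_rpow_le_of_sum_sq_eq_one hp (s := s)
      (u := fun i => u i / √V) (by
        simp only [div_pow, Real.sq_sqrt hV0.le, ← Finset.sum_div, ← hV, div_self hV0.ne'])
    have rescale (x : ℝ) : |x / √V| ^ p = |x| ^ p / V ^ (p / 2) := by
      rw [abs_div, abs_of_nonneg (Real.sqrt_nonneg V), Real.div_rpow (abs_nonneg x) (by positivity),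
        Real.sqrt_eq_rpow, ← Real.rpow_mul hV0.le, one_div_mul_eq_div]
    simp only [← mul_div_assoc, ← Finset.sum_div, rescale] at normalized
    rwa [div_le_iff₀ (by positivity), mul_assoc] at normalized

lemma sum_powerset_nnnorm_sum_signOn_rpow_le {p : ℝ} (hp : 0 < p) (s : Finset ι) (u : ι → ℝ) :
    ∑ t ∈ s.powerset, ‖∑ i ∈ s, signOn t i * u i‖₊ ^ p ≤
      s.powerset.card * (khintchineConst p * (∑ i ∈ s, ‖u i‖₊ ^ 2) ^ (p / 2)) := by
  rw [← NNReal.coe_le_coe]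
  push_cast [Finset.card_powerset]
  simpa only [Real.norm_eq_abs, sq_abs] using sum_powerset_abs_sum_signOn_rpow_le hp s u

lemma card_mul_rpow_le_sum_rpow {Λ : Type*} {T : Finset Λ} (hT : T.Nonempty) {q : ℝ} (hq : 1 ≤ q)
    {X : Λ → ℝ≥0} {V : ℝ≥0} (hX : ∑ t ∈ T, X t = T.card * V) :
    T.card * V ^ q ≤ ∑ t ∈ T, X t ^ q := by
  have card_pos : (0 : ℝ≥0) < T.card := by exact_mod_cast hT.card_pos
  have jensen := NNReal.rpow_sum_le_const_mul_sum_rpow T X hq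
  rw [hX, NNReal.mul_rpow, ← sub_add_cancel q 1, NNReal.rpow_add card_pos.ne', sub_add_cancel,
    NNReal.rpow_one, mul_assoc] at jensen
  exact le_of_mul_le_mul_left jensen (NNReal.rpow_pos card_pos)

lemma card_mul_rpow_sum_nnnorm_sq_le {p : ℝ} (hp : 2 ≤ p) (s : Finset ι) (t : Finset κ)
    (u : ι × κ → ℝ) :
    (s.powerset ×ˢ t.powerset).card * (∑ x ∈ s ×ˢ t, ‖u x‖₊ ^ 2) ^ (p / 2) ≤
      ∑ σ ∈ s.powerset ×ˢ t.powerset,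
        ‖∑ x ∈ s ×ˢ t, signOn σ.1 x.1 * signOn σ.2 x.2 * u x‖₊ ^ p := by
  have second_moment : ∑ σ ∈ s.powerset ×ˢ t.powerset,
      ‖∑ x ∈ s ×ˢ t, signOn σ.1 x.1 * signOn σ.2 x.2 * u x‖₊ ^ 2 =
        (s.powerset ×ˢ t.powerset).card * ∑ x ∈ s ×ˢ t, ‖u x‖₊ ^ 2 := by
    rw [← NNReal.coe_inj]
    push_cast [Finset.card_product, Finset.card_powerset]
    simpa only [Real.norm_eq_abs, sq_abs] using sum_powerset_sum_signOn_mul_signOn_sq s t u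
  have sq_rpow (x : ℝ≥0) : (x ^ 2) ^ (p / 2) = x ^ p := by
    rw [← NNReal.rpow_natCast, ← NNReal.rpow_mul, Nat.cast_two, mul_div_cancel₀ p two_ne_zero]
  have powersets_nonempty : (s.powerset ×ˢ t.powerset).Nonempty :=
    s.powerset_nonempty.product t.powerset_nonempty
  simpa only [sq_rpow] using
    card_mul_rpow_le_sum_rpow powersets_nonempty ((one_le_div₀ two_pos).2 hp) second_moment

end Rademacher

section Averaging

variable {Λ Ω : Type*} [MeasurableSpace Ω] {μ : Measure Ω} {T : Finset Λ} {F : Λ → Ω → ℝ≥0∞}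
  {G : Ω → ℝ≥0∞} {c : ℝ≥0∞}

lemma le_lintegral_of_sum_le_card_mul (hT : T.Nonempty) (hF : ∀ t ∈ T, Measurable (F t))
    (hc : ∀ t ∈ T, c ≤ ∫⁻ ω, F t ω ∂μ) (hG : ∀ ω, ∑ t ∈ T, F t ω ≤ T.card * G ω) :
    c ≤ ∫⁻ ω, G ω ∂μ := by
  rw [← ENNReal.mul_le_mul_iff_right (Nat.cast_ne_zero.2 hT.card_ne_zero)
    (ENNReal.natCast_ne_top T.card)]
  calc T.card * c ≤ ∑ t ∈ T, ∫⁻ ω, F t ω ∂μ := by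
        simpa only [nsmul_eq_mul] using Finset.card_nsmul_le_sum T _ c hc
    _ = ∫⁻ ω, ∑ t ∈ T, F t ω ∂μ := (lintegral_finsetSum T hF).symm
    _ ≤ ∫⁻ ω, T.card * G ω ∂μ := lintegral_mono hG
    _ = T.card * ∫⁻ ω, G ω ∂μ := lintegral_const_mul' _ _ (ENNReal.natCast_ne_top _)

lemma lintegral_le_of_card_mul_le_sum (hT : T.Nonempty) (hF : ∀ t ∈ T, Measurable (F t))
    (hc : ∀ t ∈ T, ∫⁻ ω, F t ω ∂μ ≤ c) (hG : ∀ ω, T.card * G ω ≤ ∑ t ∈ T, F t ω) :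
    ∫⁻ ω, G ω ∂μ ≤ c := by
  rw [← ENNReal.mul_le_mul_iff_right (Nat.cast_ne_zero.2 hT.card_ne_zero)
    (ENNReal.natCast_ne_top T.card)]
  calc T.card * ∫⁻ ω, G ω ∂μ = ∫⁻ ω, T.card * G ω ∂μ :=
        (lintegral_const_mul' _ _ (ENNReal.natCast_ne_top _)).symm
    _ ≤ ∫⁻ ω, ∑ t ∈ T, F t ω ∂μ := lintegral_mono hG
    _ = ∑ t ∈ T, ∫⁻ ω, F t ω ∂μ := lintegral_finsetSum T hF
    _ ≤ T.card * c := by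
        simpa only [nsmul_eq_mul] using Finset.sum_le_card_nsmul T _ c hc

end Averaging

section LowerWeightBound

variable {ι κ ρ Ω Ω' : Type*} [MeasurableSpace Ω] [MeasurableSpace Ω'] {μ : Measure Ω}
  {ν : Measure Ω'} {q : ℝ} {s : Finset ι} {t : Finset κ}

/-- A lower estimate, with weights `v`, for the `L_q(μ)` norms of the nonnegative combinations of
the `φ i` with `i ∈ s`. It is applied to `φ i = f i ^ 2`, so that the right-hand side is a power of
the norm of a square function of the `f i`. -/
def LowerWeightBound (q : ℝ) (μ : Measure Ω) (s : Finset ι) (φ : ι → Ω → ℝ≥0) (v : ι → ℝ≥0)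
    (c : ℝ≥0) : Prop :=
  ∀ D : ι → ℝ≥0, c * ((∑ i ∈ s, D i * v i : ℝ≥0) : ℝ≥0∞) ^ q ≤
    ∫⁻ ω, ((∑ i ∈ s, D i * φ i ω : ℝ≥0) : ℝ≥0∞) ^ q ∂μ

/-- The lower bounds are tested on sign changes of `∑ i ∈ s, √(D i) * f i`, whose average is
controlled by Khintchine's inequality. -/
lemma lowerWeightBound_nnnorm_sq {p : ℝ} (hp : 0 < p) {f : ι → Ω → ℝ} {v : ι → ℝ≥0} {c : ℝ≥0}
    (hf : ∀ i, Measurable (f i))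
    (hc : ∀ d : ι → ℝ, c * ((∑ i ∈ s, ‖d i‖₊ ^ 2 * v i : ℝ≥0) : ℝ≥0∞) ^ (p / 2) ≤
      ∫⁻ ω, ‖∑ i ∈ s, d i * f i ω‖ₑ ^ p ∂μ) :
    LowerWeightBound (p / 2) μ s (fun i ω => ‖f i ω‖₊ ^ 2) v (c / khintchineConst p) := by
  intro D
  have const_ne_zero : khintchineConst p ≠ 0 := (khintchineConst_pos hp).ne'
  rw [ENNReal.coe_div const_ne_zero, ← ENNReal.mul_div_right_comm,
    ENNReal.div_le_iff' (by simpa using const_ne_zero) ENNReal.coe_ne_top,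
    ← lintegral_const_mul' _ _ ENNReal.coe_ne_top]
  refine le_lintegral_of_sum_le_card_mul s.powerset_nonempty
    (F := fun t ω => ‖∑ i ∈ s, signOn t i * (NNReal.sqrt (D i) * f i ω)‖ₑ ^ p)
    (fun t _ => by fun_prop) (fun t _ => ?_) fun ω => ?_
  · have test := hc fun i => signOn t i * NNReal.sqrt (D i)
    simpa only [nnnorm_mul, nnnorm_signOn, one_mul, NNReal.nnnorm_eq, NNReal.sq_sqrt, mul_assoc]
      using test
  · have khintchine := sum_powerset_nnnorm_sum_signOn_rpow_le hp s fun i =>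
      NNReal.sqrt (D i) * f i ω
    simp only [nnnorm_mul, mul_pow, NNReal.nnnorm_eq, NNReal.sq_sqrt] at khintchine
    simp only [enorm_eq_nnnorm, ← ENNReal.coe_rpow_of_nonneg _ hp.le,
      ← ENNReal.coe_rpow_of_nonneg _ (half_pos hp).le]
    exact_mod_cast khintchine

lemma LowerWeightBound.prod [SFinite μ] [SFinite ν] {φ : ι → Ω → ℝ≥0} {ψ : κ → Ω' → ℝ≥0}
    {v : ι → ℝ≥0} {w : κ → ℝ≥0} {c c' : ℝ≥0} (hφ : ∀ i, Measurable (φ i))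
    (hψ : ∀ j, Measurable (ψ j)) (hv : LowerWeightBound q μ s φ v c)
    (hw : LowerWeightBound q ν t ψ w c') :
    LowerWeightBound q (μ.prod ν) (s ×ˢ t) (fun x z => φ x.1 z.1 * ψ x.2 z.2)
      (fun x => v x.1 * w x.2) (c * c') := by
  intro D
  have inner (ω' : Ω') :
      c * ((∑ j ∈ t, (∑ i ∈ s, D (i, j) * v i) * ψ j ω' : ℝ≥0) : ℝ≥0∞) ^ q ≤
        ∫⁻ ω, ((∑ x ∈ s ×ˢ t, D x * (φ x.1 ω * ψ x.2 ω') : ℝ≥0) : ℝ≥0∞) ^ q ∂μ := by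
    convert hv fun i => ∑ j ∈ t, D (i, j) * ψ j ω' using 5
    · simp only [Finset.sum_mul]
      rw [Finset.sum_comm]
      simp only [mul_right_comm]
    · simp only [Finset.sum_product, Finset.sum_mul, mul_assoc, mul_comm (ψ _ _)]
  have outer := hw fun j => ∑ i ∈ s, D (i, j) * v i
  have sum_prod : ∑ x ∈ s ×ˢ t, D x * (v x.1 * w x.2) =
      ∑ j ∈ t, (∑ i ∈ s, D (i, j) * v i) * w j := by
    simp only [Finset.sum_product_right, Finset.sum_mul, mul_assoc]
  rw [lintegral_prod_symm _ (by fun_prop), sum_prod, ENNReal.coe_mul, mul_assoc]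
  calc _ ≤ c * ∫⁻ ω', ((∑ j ∈ t, (∑ i ∈ s, D (i, j) * v i) * ψ j ω' : ℝ≥0) : ℝ≥0∞) ^ q ∂ν := by
        gcongr
    _ = ∫⁻ ω', c * ((∑ j ∈ t, (∑ i ∈ s, D (i, j) * v i) * ψ j ω' : ℝ≥0) : ℝ≥0∞) ^ q ∂ν :=
        (lintegral_const_mul' _ _ ENNReal.coe_ne_top).symm
    _ ≤ _ := lintegral_mono inner

lemma sum_rpow_le_rpow_sum (hq : 1 ≤ q) (J : Finset ρ) (y : ρ → ℝ≥0∞) :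
    ∑ k ∈ J, y k ^ q ≤ (∑ k ∈ J, y k) ^ q := by
  classical
  induction J using Finset.induction_on with
  | empty => simp
  | insert k J hk ih =>
    rw [Finset.sum_insert hk, Finset.sum_insert hk]
    exact (add_le_add_right ih _).trans (ENNReal.add_rpow_le_rpow_add _ _ hq)

lemma sum_rpow_sum_indicator_le (hq : 1 ≤ q) {J : Finset ρ} {r : ρ → Set ι}
    (hr : (J : Set ρ).PairwiseDisjoint r) (s : Finset ι) (y : ι → ℝ≥0∞) :
    ∑ k ∈ J, (∑ i ∈ s, (r k).indicator y i) ^ q ≤ (∑ i ∈ s, y i) ^ q := by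
  refine (sum_rpow_le_rpow_sum hq J _).trans ?_
  rw [Finset.sum_comm]
  gcongr with i
  rw [← Finset.indicator_biUnion_apply J r hr]
  exact Set.indicator_le_self _ _ i

lemma LowerWeightBound.tsum_indicator_le (hq : 1 ≤ q) {φ : ι → Ω → ℝ≥0} {v : ρ → ι → ℝ≥0}
    {c : ℝ≥0} {r : ρ → Set ι} (hφ : ∀ i, Measurable (φ i))
    (hr : Pairwise (Function.onFun Disjoint r)) (hv : ∀ k, LowerWeightBound q μ s φ (v k) c)
    (D : ι → ℝ≥0) :
    c * ∑' k, ((∑ i ∈ s, (r k).indicator (fun i => D i * v k i) i : ℝ≥0) : ℝ≥0∞) ^ q ≤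
      ∫⁻ ω, ((∑ i ∈ s, D i * φ i ω : ℝ≥0) : ℝ≥0∞) ^ q ∂μ := by
  rw [← ENNReal.tsum_mul_left]
  refine ENNReal.summable.tsum_le_of_sum_le fun J => ?_
  calc ∑ k ∈ J, c * ((∑ i ∈ s, (r k).indicator (fun i => D i * v k i) i : ℝ≥0) : ℝ≥0∞) ^ q
      ≤ ∑ k ∈ J, ∫⁻ ω, ((∑ i ∈ s, (r k).indicator (fun i => D i * φ i ω) i : ℝ≥0) : ℝ≥0∞) ^ q
          ∂μ := Finset.sum_le_sum fun k _ => by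
        simpa only [Set.indicator_mul_left] using hv k ((r k).indicator D)
    _ = ∫⁻ ω, ∑ k ∈ J, ((∑ i ∈ s, (r k).indicator (fun i => D i * φ i ω) i : ℝ≥0) : ℝ≥0∞) ^ q
          ∂μ := by
        refine (lintegral_finsetSum J fun k _ => ?_).symm
        simp only [Set.indicator_mul_left]
        fun_prop
    _ ≤ ∫⁻ ω, ((∑ i ∈ s, D i * φ i ω : ℝ≥0) : ℝ≥0∞) ^ q ∂μ := by
        refine lintegral_mono fun ω => ?_
        simp only [ENNReal.ofNNReal_finsetSum, ENNReal.coe_indicator]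
        exact sum_rpow_sum_indicator_le hq (hr.set_pairwise _) s _

end LowerWeightBound

section Unconditional

variable {ι κ Ω Ω' : Type*} [MeasurableSpace Ω] [MeasurableSpace Ω'] {μ : Measure Ω}
  {ν : Measure Ω'} {f : ι → Ω → ℝ} {g : κ → Ω' → ℝ} {K K' : ℝ≥0} {s : Finset ι}
  {t : Finset κ} {p : ℝ}

/-- The finite sequence `(f i)_{i ∈ s}` is unconditional in `L_p(μ)`: multipliers bounded by `1`
increase the `p`-th power of the norm of a linear combination at most by the factor `K`. -/
def IsUnconditionalOn (p : ℝ) (μ : Measure Ω) (s : Finset ι) (f : ι → Ω → ℝ) (K : ℝ≥0) : Prop :=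
  ∀ ε d : ι → ℝ, (∀ i, ‖ε i‖₊ ≤ 1) →
    ∫⁻ ω, ‖∑ i ∈ s, ε i * d i * f i ω‖ₑ ^ p ∂μ ≤ K * ∫⁻ ω, ‖∑ i ∈ s, d i * f i ω‖ₑ ^ p ∂μ

lemma IsUnconditionalOn.lintegral_prod_le [SFinite μ] [SFinite ν]
    (hK : IsUnconditionalOn p μ s f K) (hf : ∀ i, Measurable (f i)) {h : ι → Ω' → ℝ}
    (hh : ∀ i, Measurable (h i)) {ε : ι → ℝ} (hε : ∀ i, ‖ε i‖₊ ≤ 1) :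
    ∫⁻ z, ‖∑ i ∈ s, ε i * h i z.2 * f i z.1‖ₑ ^ p ∂(μ.prod ν) ≤
      K * ∫⁻ z, ‖∑ i ∈ s, h i z.2 * f i z.1‖ₑ ^ p ∂(μ.prod ν) := by
  rw [lintegral_prod_symm _ (by fun_prop), lintegral_prod_symm _ (by fun_prop),
    ← lintegral_const_mul' _ _ ENNReal.coe_ne_top]
  exact lintegral_mono fun ω' => hK ε (fun i => h i ω') hε

lemma IsUnconditionalOn.lintegral_prod_mul_le [SFinite μ] [SFinite ν]
    (hK : IsUnconditionalOn p μ s f K) (hK' : IsUnconditionalOn p ν t g K')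
    (hf : ∀ i, Measurable (f i)) (hg : ∀ j, Measurable (g j)) {ε : ι → ℝ} (hε : ∀ i, ‖ε i‖₊ ≤ 1)
    {δ : κ → ℝ} (hδ : ∀ j, ‖δ j‖₊ ≤ 1) (u : ι × κ → ℝ) :
    ∫⁻ z, ‖∑ x ∈ s ×ˢ t, ε x.1 * δ x.2 * (u x * f x.1 z.1 * g x.2 z.2)‖ₑ ^ p ∂(μ.prod ν) ≤
      K * K' * ∫⁻ z, ‖∑ x ∈ s ×ˢ t, u x * f x.1 z.1 * g x.2 z.2‖ₑ ^ p ∂(μ.prod ν) := by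
  have left := hK.lintegral_prod_le (ν := ν) hf (h := fun i ω' => ∑ j ∈ t, δ j * u (i, j) * g j ω')
    (by fun_prop) hε
  have right := hK'.lintegral_prod_le (ν := μ) hg (h := fun j ω => ∑ i ∈ s, u (i, j) * f i ω)
    (by fun_prop) hδ
  rw [← lintegral_prod_swap (μ := ν), ← lintegral_prod_swap (μ := ν)] at right
  simp only [Prod.fst_swap, Prod.snd_swap] at right
  calc ∫⁻ z, ‖∑ x ∈ s ×ˢ t, ε x.1 * δ x.2 * (u x * f x.1 z.1 * g x.2 z.2)‖ₑ ^ p ∂(μ.prod ν)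
      = ∫⁻ z, ‖∑ i ∈ s, ε i * (∑ j ∈ t, δ j * u (i, j) * g j z.2) * f i z.1‖ₑ ^ p ∂(μ.prod ν) := by
        simp only [Finset.sum_product, Finset.mul_sum, Finset.sum_mul, mul_assoc, mul_comm (f _ _)]
    _ ≤ K * ∫⁻ z, ‖∑ i ∈ s, (∑ j ∈ t, δ j * u (i, j) * g j z.2) * f i z.1‖ₑ ^ p ∂(μ.prod ν) := left
    _ = K * ∫⁻ z, ‖∑ j ∈ t, δ j * (∑ i ∈ s, u (i, j) * f i z.1) * g j z.2‖ₑ ^ p ∂(μ.prod ν) := by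
        simp only [Finset.mul_sum, Finset.sum_mul, Finset.sum_comm (s := t), mul_assoc,
          mul_comm (f _ _)]
    _ ≤ K * (K' * ∫⁻ z, ‖∑ j ∈ t, (∑ i ∈ s, u (i, j) * f i z.1) * g j z.2‖ₑ ^ p ∂(μ.prod ν)) := by
        gcongr
    _ = K * K' * ∫⁻ z, ‖∑ x ∈ s ×ˢ t, u x * f x.1 z.1 * g x.2 z.2‖ₑ ^ p ∂(μ.prod ν) := by
        simp only [Finset.sum_product_right, Finset.sum_mul, mul_assoc]

lemma IsUnconditionalOn.lintegral_prod_square_function_le [SFinite μ] [SFinite ν] (hp : 2 ≤ p)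
    (hK : IsUnconditionalOn p μ s f K) (hK' : IsUnconditionalOn p ν t g K')
    (hf : ∀ i, Measurable (f i)) (hg : ∀ j, Measurable (g j)) (u : ι × κ → ℝ) :
    ∫⁻ z, ((∑ x ∈ s ×ˢ t, ‖u x * f x.1 z.1 * g x.2 z.2‖₊ ^ 2 : ℝ≥0) : ℝ≥0∞) ^ (p / 2)
        ∂(μ.prod ν) ≤
      K * K' * ∫⁻ z, ‖∑ x ∈ s ×ˢ t, u x * f x.1 z.1 * g x.2 z.2‖ₑ ^ p ∂(μ.prod ν) := by
  have hp₀ : 0 ≤ p := by linarith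
  refine lintegral_le_of_card_mul_le_sum (s.powerset_nonempty.product t.powerset_nonempty)
    (F := fun σ z => ‖∑ x ∈ s ×ˢ t, signOn σ.1 x.1 * signOn σ.2 x.2 *
      (u x * f x.1 z.1 * g x.2 z.2)‖ₑ ^ p) (fun σ _ => by fun_prop) (fun σ _ => ?_) fun z => ?_
  · exact hK.lintegral_prod_mul_le hK' hf hg (fun i => (nnnorm_signOn σ.1 i).le)
      (fun j => (nnnorm_signOn σ.2 j).le) u
  · have jensen := card_mul_rpow_sum_nnnorm_sq_le hp s t fun x => u x * f x.1 z.1 * g x.2 z.2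
    simp only [enorm_eq_nnnorm, ← ENNReal.coe_rpow_of_nonneg _ hp₀,
      ← ENNReal.coe_rpow_of_nonneg _ (div_nonneg hp₀ zero_le_two)]
    exact_mod_cast jensen

end Unconditional

section SequenceSpace

variable {p : ℝ} {𝒞 : Set (PWPair α)} {P : Set (Set α)} {W x y : α → ℝ} {s : Finset α}

lemma ofReal_sq_eq_nnnorm_sq (a : ℝ) : ENNReal.ofReal (a ^ 2) = ((‖a‖₊ ^ 2 : ℝ≥0) : ℝ≥0∞) := by
  rw [← sq_abs, ENNReal.ofReal_pow (abs_nonneg a), ← Real.norm_eq_abs, ofReal_norm, ENNReal.coe_pow,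
    enorm_eq_nnnorm]

lemma tsum_subtype_eq_sum_indicator {M : Type*} [AddCommMonoid M] [TopologicalSpace M] [T2Space M]
    {f : α → M} (hf : ∀ a ∉ s, f a = 0) (r : Set α) :
    ∑' a : r, f a = ∑ a ∈ s, r.indicator f a := by
  rw [tsum_subtype r f]
  exact tsum_eq_sum fun a ha => by simp only [Set.indicator_apply_eq_zero, hf a ha, implies_true]

lemma pwNorm_rpow (hp : p ≠ 0) (hx : ∀ a ∉ s, x a = 0) :
    pwNorm p P W x ^ p =
      ∑' N : P, (∑ a ∈ s, N.1.indicator (fun a => ENNReal.ofReal (x a ^ 2 * W a ^ 2)) a) ^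
        (p / 2) := by
  rw [pwNorm, ← ENNReal.rpow_mul, one_div_mul_cancel hp, ENNReal.rpow_one]
  refine tsum_congr fun N => ?_
  rw [tsum_subtype_eq_sum_indicator (s := s)
    (f := fun a => ENNReal.ofReal (x a ^ 2 * W a ^ 2)) fun a ha => by simp [hx a ha]]

lemma pwNorm_rpow_le (hp : 2 ≤ p) (hP : P.PairwiseDisjoint id) (hW : IsWeight W)
    (hx : ∀ a ∉ s, x a = 0) :
    pwNorm p P W x ^ p ≤ (∑ a ∈ s, ENNReal.ofReal (x a ^ 2)) ^ (p / 2) := by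
  rw [pwNorm_rpow (by linarith) hx]
  refine ENNReal.summable.tsum_le_of_sum_le fun J => ?_
  calc _ ≤ (∑ a ∈ s, ENNReal.ofReal (x a ^ 2 * W a ^ 2)) ^ (p / 2) :=
        sum_rpow_sum_indicator_le ((one_le_div₀ two_pos).2 hp)
          (((pairwise_subtype_iff_pairwise_set _ _).2 hP).set_pairwise _) s _
    _ ≤ (∑ a ∈ s, ENNReal.ofReal (x a ^ 2)) ^ (p / 2) := by
        gcongr with a
        exact mul_le_of_le_one_right (sq_nonneg _) (pow_le_one₀ (hW a).1.le (hW a).2)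

lemma famNorm_lt_top (hp : 2 ≤ p) (h𝒞 : IsPWFamily 𝒞) (hx : ∀ a ∉ s, x a = 0) :
    famNorm p 𝒞 x < ⊤ := by
  have hp₀ : 0 < p := by linarith
  have sum_ne_top : ∑ a ∈ s, ENNReal.ofReal (x a ^ 2) ≠ ⊤ :=
    (ENNReal.sum_lt_top.2 fun _ _ => ENNReal.ofReal_lt_top).ne
  calc famNorm p 𝒞 x ≤ ((∑ a ∈ s, ENNReal.ofReal (x a ^ 2)) ^ (p / 2)) ^ p⁻¹ :=
        iSup₂_le fun PW hPW => (ENNReal.le_rpow_inv_iff hp₀).2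
          (pwNorm_rpow_le hp (h𝒞 PW hPW).1.2.1 (h𝒞 PW hPW).2 hx)
    _ < ⊤ := ENNReal.rpow_lt_top_of_nonneg (by positivity)
        (ENNReal.rpow_ne_top_of_nonneg (by positivity) sum_ne_top)

lemma famNorm_mono (hp : 0 ≤ p) (h : ∀ a, ‖x a‖₊ ≤ ‖y a‖₊) : famNorm p 𝒞 x ≤ famNorm p 𝒞 y := by
  have sq_le (a : α) : x a ^ 2 ≤ y a ^ 2 := sq_le_sq.2 (h a)
  unfold famNorm pwNorm
  gcongr ⨆ PW ∈ _, (∑' N, (∑' j, ENNReal.ofReal (?_ * _)) ^ _) ^ _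
  exact sq_le _

lemma rpow_sum_indicator_le_famNorm_rpow (hp : 0 < p) {PW : PWPair α} (hPW : PW ∈ 𝒞) {N : Set α}
    (hN : N ∈ PW.1) (hx : ∀ a ∉ s, x a = 0) :
    (∑ a ∈ s, N.indicator (fun a => ENNReal.ofReal (x a ^ 2 * PW.2 a ^ 2)) a) ^ (p / 2) ≤
      famNorm p 𝒞 x ^ p := by
  calc _ ≤ pwNorm p PW.1 PW.2 x ^ p := by
        rw [pwNorm_rpow hp.ne' hx]
        exact ENNReal.le_tsum (⟨N, hN⟩ : PW.1)
    _ ≤ famNorm p 𝒞 x ^ p := by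
        gcongr
        exact le_iSup₂_of_le PW hPW le_rfl

end SequenceSpace

section LpEmbedding

variable {p : ℝ} {𝒞 : Set (PWPair α)} {Ω : Type*} [MeasurableSpace Ω] {μ : Measure Ω}
  {S : (α → ℝ) → Lp ℝ (ENNReal.ofReal p) μ} {M c : ℝ≥0}

/-- `S` is linear on `X(𝒞) = {x | famNorm p 𝒞 x < ⊤}`, where it is bounded by `M` and bounded
below by `c > 0`. Its values outside `X(𝒞)` are irrelevant. -/
structure IsLpEmbedding (p : ℝ) (𝒞 : Set (PWPair α)) (μ : Measure Ω)
    (S : (α → ℝ) → Lp ℝ (ENNReal.ofReal p) μ) (M c : ℝ≥0) : Prop where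
  pos : 0 < c
  map_add : ∀ x y, famNorm p 𝒞 x < ⊤ → famNorm p 𝒞 y < ⊤ → S (x + y) = S x + S y
  map_smul : ∀ (r : ℝ) (x), famNorm p 𝒞 x < ⊤ → S (r • x) = r • S x
  norm_le : ∀ x, famNorm p 𝒞 x < ⊤ → ENNReal.ofReal ‖S x‖ ≤ M * famNorm p 𝒞 x
  le_norm : ∀ x, famNorm p 𝒞 x < ⊤ → c * famNorm p 𝒞 x ≤ ENNReal.ofReal ‖S x‖

lemma lintegral_enorm_sum_mul_rpow {ι : Type*} (hp : 0 < p) (s : Finset ι) (d : ι → ℝ)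
    (g : ι → Lp ℝ (ENNReal.ofReal p) μ) :
    ∫⁻ ω, ‖∑ i ∈ s, d i * g i ω‖ₑ ^ p ∂μ = ENNReal.ofReal ‖∑ i ∈ s, d i • g i‖ ^ p := by
  have coeFn_sum : ∀ᵐ ω ∂μ, (∑ i ∈ s, d i • g i : Lp ℝ (ENNReal.ofReal p) μ) ω =
      ∑ i ∈ s, d i * g i ω := by
    have coeFn_smul : ∀ᵐ ω ∂μ, ∀ i ∈ s, (d i • g i : Lp ℝ (ENNReal.ofReal p) μ) ω = d i * g i ω :=
      (Finset.eventually_all s).2 fun i _ => Lp.coeFn_smul (d i) (g i)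
    filter_upwards [Lp.coeFn_finsetSum s fun i => d i • g i, coeFn_smul] with ω hsum hsmul
    rw [hsum, Finset.sum_apply]
    exact Finset.sum_congr rfl hsmul
  rw [Lp.norm_def, ENNReal.ofReal_toReal (Lp.eLpNorm_ne_top _),
    eLpNorm_eq_lintegral_rpow_enorm_toReal (by simpa using hp) ENNReal.ofReal_ne_top,
    ENNReal.toReal_ofReal hp.le, ← ENNReal.rpow_mul, one_div_mul_cancel hp.ne', ENNReal.rpow_one]
  refine lintegral_congr_ae ?_
  filter_upwards [coeFn_sum] with ω hω
  rw [hω]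

namespace IsLpEmbedding

lemma map_indicator (hS : IsLpEmbedding p 𝒞 μ S M c) (hp : 2 ≤ p) (h𝒞 : IsPWFamily 𝒞)
    (s : Finset α) (d : α → ℝ) :
    S ((s : Set α).indicator d) = ∑ a ∈ s, d a • S (coordVec a) := by
  classical
  induction s using Finset.induction_on with
  | empty =>
    simpa only [zero_smul, Finset.coe_empty, Set.indicator_empty, Finset.sum_empty] using!
      hS.map_smul 0 0 (famNorm_lt_top hp h𝒞 (s := ∅) fun _ _ => rfl)
  | insert a s ha ih =>
    have indicator_insert : ((insert a s : Finset α) : Set α).indicator d =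
        d a • coordVec a + (s : Set α).indicator d := by
      ext b
      by_cases hb : b = a
      · simp [coordVec, hb, ha]
      · simp [coordVec, hb, Set.indicator_apply]
    have coordVec_lt_top : famNorm p 𝒞 (coordVec a) < ⊤ :=
      famNorm_lt_top hp h𝒞 (s := {a}) fun b hb =>
        Set.indicator_of_notMem (by simpa using hb) _
    have smul_lt_top : famNorm p 𝒞 (d a • coordVec a) < ⊤ :=
      famNorm_lt_top hp h𝒞 (s := {a}) fun b hb => by simp_all [coordVec]
    have rest_lt_top : famNorm p 𝒞 ((s : Set α).indicator d) < ⊤ :=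
      famNorm_lt_top hp h𝒞 fun b hb => Set.indicator_of_notMem (by simpa using hb) d
    rw [indicator_insert, hS.map_add _ _ smul_lt_top rest_lt_top, hS.map_smul _ _ coordVec_lt_top,
      ih, Finset.sum_insert ha]

lemma lintegral_enorm_sum_rpow (hS : IsLpEmbedding p 𝒞 μ S M c) (hp : 2 ≤ p) (h𝒞 : IsPWFamily 𝒞)
    (s : Finset α) (d : α → ℝ) :
    ∫⁻ ω, ‖∑ a ∈ s, d a * S (coordVec a) ω‖ₑ ^ p ∂μ =
      ENNReal.ofReal ‖S ((s : Set α).indicator d)‖ ^ p := by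
  rw [lintegral_enorm_sum_mul_rpow (by linarith), hS.map_indicator hp h𝒞]

lemma isUnconditionalOn (hS : IsLpEmbedding p 𝒞 μ S M c) (hp : 2 ≤ p) (h𝒞 : IsPWFamily 𝒞)
    (s : Finset α) :
    IsUnconditionalOn p μ s (fun a ω => S (coordVec a) ω) ((M / c) ^ p) := by
  intro ε d hε
  have hp₀ : 0 ≤ p := by linarith
  have lt_top (e : α → ℝ) : famNorm p 𝒞 ((s : Set α).indicator e) < ⊤ :=
    famNorm_lt_top hp h𝒞 fun b hb => Set.indicator_of_notMem (by simpa using hb) e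
  rw [hS.lintegral_enorm_sum_rpow hp h𝒞 s fun a => ε a * d a, hS.lintegral_enorm_sum_rpow hp h𝒞,
    ENNReal.coe_rpow_of_nonneg _ hp₀, ← ENNReal.mul_rpow_of_nonneg _ _ hp₀]
  gcongr
  calc ENNReal.ofReal ‖S ((s : Set α).indicator fun a => ε a * d a)‖
      ≤ M * famNorm p 𝒞 ((s : Set α).indicator fun a => ε a * d a) := hS.norm_le _ (lt_top _)
    _ ≤ M * famNorm p 𝒞 ((s : Set α).indicator d) := by
        gcongr
        refine famNorm_mono hp₀ fun a => ?_
        simp only [Set.indicator_mul_right, nnnorm_mul]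
        exact mul_le_of_le_one_left' (hε a)
    _ = (M / c : ℝ≥0) * (c * famNorm p 𝒞 ((s : Set α).indicator d)) := by
        rw [← mul_assoc, ← ENNReal.coe_mul, div_mul_cancel₀ _ hS.pos.ne']
    _ ≤ (M / c : ℝ≥0) * ENNReal.ofReal ‖S ((s : Set α).indicator d)‖ := by
        gcongr
        exact hS.le_norm _ (lt_top d)

lemma lowerWeightBound (hS : IsLpEmbedding p 𝒞 μ S M c) (hp : 2 ≤ p) (h𝒞 : IsPWFamily 𝒞)
    (s : Finset α) {PW : PWPair α} (hPW : PW ∈ 𝒞) {N : Set α} (hN : N ∈ PW.1) :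
    LowerWeightBound (p / 2) μ s (fun a ω => ‖S (coordVec a) ω‖₊ ^ 2)
      (N.indicator fun a => ‖PW.2 a‖₊ ^ 2) (c ^ p / khintchineConst p) := by
  have hp₀ : 0 < p := by linarith
  refine lowerWeightBound_nnnorm_sq hp₀ (fun a => (Lp.stronglyMeasurable _).measurable) fun d => ?_
  have supported : ∀ a ∉ s, (s : Set α).indicator d a = 0 := fun a ha =>
    Set.indicator_of_notMem (by simpa using ha) d
  have block_le := rpow_sum_indicator_le_famNorm_rpow hp₀ hPW hN supported
  have block_eq : ((∑ a ∈ s, ‖d a‖₊ ^ 2 * N.indicator (fun a => ‖PW.2 a‖₊ ^ 2) a : ℝ≥0) : ℝ≥0∞) =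
      ∑ a ∈ s, N.indicator
        (fun a => ENNReal.ofReal ((s : Set α).indicator d a ^ 2 * PW.2 a ^ 2)) a := by
    rw [ENNReal.ofNNReal_finsetSum]
    refine Finset.sum_congr rfl fun a ha => ?_
    by_cases haN : a ∈ N <;>
      simp [haN, ha, ENNReal.ofReal_mul (sq_nonneg (d a)), ofReal_sq_eq_nnnorm_sq]
  rw [hS.lintegral_enorm_sum_rpow hp h𝒞, block_eq, ENNReal.coe_rpow_of_nonneg _ hp₀.le]
  calc _ ≤ (c : ℝ≥0∞) ^ p * famNorm p 𝒞 ((s : Set α).indicator d) ^ p := by gcongr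
    _ = (c * famNorm p 𝒞 ((s : Set α).indicator d)) ^ p :=
        (ENNReal.mul_rpow_of_nonneg _ _ hp₀.le).symm
    _ ≤ ENNReal.ofReal ‖S ((s : Set α).indicator d)‖ ^ p := by
        gcongr
        exact hS.le_norm _ (famNorm_lt_top hp h𝒞 supported)

end IsLpEmbedding

end LpEmbedding

section TensorProduct

variable {A B Ω Ω' : Type*} [MeasurableSpace Ω] [MeasurableSpace Ω'] {p : ℝ} {𝒞 : Set (PWPair A)}
  {𝒟 : Set (PWPair B)} {μ : Measure Ω} {ν : Measure Ω'} [SFinite μ] [SFinite ν]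
  {S : (A → ℝ) → Lp ℝ (ENNReal.ofReal p) μ} {T : (B → ℝ) → Lp ℝ (ENNReal.ofReal p) ν}
  {MS cS MT cT : ℝ≥0} {R : Set (Set (A × B))} {PR : Set (A × B) → PWPair A}
  {QR : Set (A × B) → PWPair B}

lemma tsum_ofReal_sq_mul_sq_eq_sum_indicator {s : Finset (A × B)} {u : A × B → ℝ}
    (hu : ∀ x ∉ s, u x = 0) {r : Set (A × B)} {p₀ : Set A} {q₀ : Set B} (hr : r ⊆ p₀ ×ˢ q₀)
    (w : A → ℝ) (w' : B → ℝ) :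
    ∑' x : r, ENNReal.ofReal (u x ^ 2 * w x.1.1 ^ 2 * w' x.1.2 ^ 2) =
      ((∑ x ∈ s, r.indicator (fun x => ‖u x‖₊ ^ 2 * (p₀.indicator (fun a => ‖w a‖₊ ^ 2) x.1 *
        q₀.indicator (fun b => ‖w' b‖₊ ^ 2) x.2)) x : ℝ≥0) : ℝ≥0∞) := by
  rw [tsum_subtype_eq_sum_indicator (s := s)
    (f := fun x => ENNReal.ofReal (u x ^ 2 * w x.1 ^ 2 * w' x.2 ^ 2)) fun x hx => by simp [hu x hx],
    ENNReal.ofNNReal_finsetSum]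
  refine Finset.sum_congr rfl fun x _ => ?_
  rw [ENNReal.coe_indicator]
  refine congrFun (Set.indicator_congr fun y hy => ?_) x
  rw [Set.indicator_of_mem (hr hy).1, Set.indicator_of_mem (hr hy).2, ← mul_pow, ← mul_pow,
    ofReal_sq_eq_nnnorm_sq, nnnorm_mul, nnnorm_mul, mul_pow, mul_pow, mul_assoc]

namespace IsLpEmbedding

lemma tsum_block_rpow_le_lintegral_square_function (hS : IsLpEmbedding p 𝒞 μ S MS cS)
    (hT : IsLpEmbedding p 𝒟 ν T MT cT) (hp : 2 ≤ p) (h𝒞 : IsPWFamily 𝒞) (h𝒟 : IsPWFamily 𝒟)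
    (hR : R.PairwiseDisjoint id)
    (hPQ : ∀ r ∈ R, PR r ∈ 𝒞 ∧ QR r ∈ 𝒟 ∧ ∃ p₀ ∈ (PR r).1, ∃ q₀ ∈ (QR r).1, r ⊆ p₀ ×ˢ q₀)
    {s : Finset A} {t : Finset B} {u : A × B → ℝ} (hu : ∀ x ∉ s ×ˢ t, u x = 0) :
    (cS ^ p / khintchineConst p * (cT ^ p / khintchineConst p) : ℝ≥0) *
        ∑' r : R, (∑' x : r.1, ENNReal.ofReal
          (u x.1 ^ 2 * (PR r.1).2 x.1.1 ^ 2 * (QR r.1).2 x.1.2 ^ 2)) ^ (p / 2) ≤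
      ∫⁻ z, ((∑ x ∈ s ×ˢ t, ‖u x * S (coordVec x.1) z.1 * T (coordVec x.2) z.2‖₊ ^ 2 : ℝ≥0) :
        ℝ≥0∞) ^ (p / 2) ∂(μ.prod ν) := by
  choose hP hQ p₀ hp₀ q₀ hq₀ hr using fun r : R => hPQ r r.2
  have measurable_S (a : A) : Measurable (S (coordVec a)) := (Lp.stronglyMeasurable _).measurable
  have measurable_T (b : B) : Measurable (T (coordVec b)) := (Lp.stronglyMeasurable _).measurable
  have block_bound (r : R) := (hS.lowerWeightBound hp h𝒞 s (hP r) (hp₀ r)).prod (by fun_prop)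
    (by fun_prop) (hT.lowerWeightBound hp h𝒟 t (hQ r) (hq₀ r))
  have blocks_bound := LowerWeightBound.tsum_indicator_le ((one_le_div₀ two_pos).2 hp)
    (by fun_prop) ((pairwise_subtype_iff_pairwise_set _ _).2 hR) block_bound fun x => ‖u x‖₊ ^ 2
  simp only [tsum_ofReal_sq_mul_sq_eq_sum_indicator hu (hr _)]
  simpa only [nnnorm_mul, mul_pow, mul_assoc] using blocks_bound

lemma tsum_block_rpow_le_lintegral (hS : IsLpEmbedding p 𝒞 μ S MS cS)
    (hT : IsLpEmbedding p 𝒟 ν T MT cT) (hp : 2 ≤ p) (h𝒞 : IsPWFamily 𝒞) (h𝒟 : IsPWFamily 𝒟)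
    (hR : R.PairwiseDisjoint id)
    (hPQ : ∀ r ∈ R, PR r ∈ 𝒞 ∧ QR r ∈ 𝒟 ∧ ∃ p₀ ∈ (PR r).1, ∃ q₀ ∈ (QR r).1, r ⊆ p₀ ×ˢ q₀)
    (u : A × B →₀ ℝ) :
    (cS ^ p / khintchineConst p * (cT ^ p / khintchineConst p) : ℝ≥0) *
        ∑' r : R, (∑' x : r.1, ENNReal.ofReal
          (u x.1 ^ 2 * (PR r.1).2 x.1.1 ^ 2 * (QR r.1).2 x.1.2 ^ 2)) ^ (p / 2) ≤
      ((MS / cS) ^ p * (MT / cT) ^ p : ℝ≥0) *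
        ∫⁻ z, ‖∑ x ∈ u.support, u x * S (coordVec x.1) z.1 * T (coordVec x.2) z.2‖ₑ ^ p
          ∂(μ.prod ν) := by
  classical
  set s := u.support.image Prod.fst
  set t := u.support.image Prod.snd
  have support_subset : u.support ⊆ s ×ˢ t := Finset.subset_product
  have sum_support (z : Ω × Ω') :
      ∑ x ∈ u.support, u x * S (coordVec x.1) z.1 * T (coordVec x.2) z.2 =
        ∑ x ∈ s ×ˢ t, u x * S (coordVec x.1) z.1 * T (coordVec x.2) z.2 :=
    Finset.sum_subset support_subset fun x _ hx => by
      rw [Finsupp.notMem_support_iff.1 hx, zero_mul, zero_mul]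
  simp only [sum_support, ENNReal.coe_mul]
  refine (hS.tsum_block_rpow_le_lintegral_square_function hT hp h𝒞 h𝒟 hR hPQ fun x hx =>
    Finsupp.notMem_support_iff.1 fun hxu => hx (support_subset hxu)).trans ?_
  exact (hS.isUnconditionalOn hp h𝒞 s).lintegral_prod_square_function_le hp
    (hT.isUnconditionalOn hp h𝒟 t) (fun a => (Lp.stronglyMeasurable _).measurable)
    (fun b => (Lp.stronglyMeasurable _).measurable) u

end IsLpEmbedding

/-- Dividing by `b + 1` rather than `b` allows `b = 0`. -/
lemma ofReal_div_rpow_mul_rpow_le (hp : 0 < p) {a b : ℝ≥0} {X I : ℝ≥0∞} (h : a * X ≤ b * I) :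
    ENNReal.ofReal ((a / (b + 1) : ℝ≥0) ^ (1 / p)) * X ^ (1 / p) ≤ I ^ (1 / p) := by
  rw [← ENNReal.ofReal_rpow_of_nonneg (by positivity) (by positivity), ENNReal.ofReal_coe_nnreal,
    ← ENNReal.mul_rpow_of_nonneg _ _ (by positivity)]
  gcongr
  rw [ENNReal.coe_div (by positivity), ← ENNReal.mul_div_right_comm]
  refine ENNReal.div_le_of_le_mul' (h.trans ?_)
  gcongr
  exact le_self_add

theorem statement14_general (hp : 2 ≤ p) (h𝒞 : IsPWFamily 𝒞) (h𝒟 : IsPWFamily 𝒟)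
    (hS : IsLpEmbedding p 𝒞 μ S MS cS) (hT : IsLpEmbedding p 𝒟 ν T MT cT) :
    ∃ C' : ℝ, 0 < C' ∧
      ∀ R : Set (Set (A × B)), R.PairwiseDisjoint id →
        ∀ (PR : Set (A × B) → PWPair A) (QR : Set (A × B) → PWPair B),
          (∀ r ∈ R, PR r ∈ 𝒞 ∧ QR r ∈ 𝒟 ∧
            ∃ p₀ ∈ (PR r).1, ∃ q₀ ∈ (QR r).1, r ⊆ p₀ ×ˢ q₀) →
          ∀ coef : A × B →₀ ℝ,
            ENNReal.ofReal C' *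
              (∑' r : R,
                (∑' ab : r.1,
                  ENNReal.ofReal ((coef ab.1) ^ 2 *
                    ((PR r.1).2 ab.1.1) ^ 2 * ((QR r.1).2 ab.1.2) ^ 2)) ^ (p / 2)) ^ (1 / p)
            ≤ eLpNorm
                (fun st : Ω × Ω' => ∑ ab ∈ coef.support,
                  coef ab * (S (coordVec ab.1)) st.1 * (T (coordVec ab.2)) st.2)
                (ENNReal.ofReal p) (μ.prod ν) := by
  have hp₀ : 0 < p := by linarith
  have cS_pos : 0 < cS := hS.pos
  have cT_pos : 0 < cT := hT.pos
  have const_pos : 0 < khintchineConst p := khintchineConst_pos hp₀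
  refine ⟨((cS ^ p / khintchineConst p * (cT ^ p / khintchineConst p) /
    ((MS / cS) ^ p * (MT / cT) ^ p + 1) : ℝ≥0) : ℝ) ^ (1 / p), by positivity,
    fun R hR PR QR hPQ coef => ?_⟩
  rw [eLpNorm_eq_lintegral_rpow_enorm_toReal (by simpa using hp₀) ENNReal.ofReal_ne_top,
    ENNReal.toReal_ofReal hp₀.le]
  exact ofReal_div_rpow_mul_rpow_le hp₀
    (hS.tsum_block_rpow_le_lintegral hT hp h𝒞 h𝒟 hR hPQ coef)

end TensorProduct

/-- With `X = X(𝒞)`, `Y = X(𝒟)` (families with the envelope property)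
embedded in `L_p([0,1])` by `S` and `T`, there is `C' > 0` such that for every partition
`R` of `A × B` and every choice, for each `r ∈ R`, of pairs `(P_r,(w_{r,a})) ∈ 𝒞` and
`(Q_r,(w'_{r,b})) ∈ 𝒟` with `r ⊆ p_r × q_r` for some `p_r ∈ P_r`, `q_r ∈ Q_r`, one has
`‖Σ c_{a,b} Sx_a ⊗ Ty_b‖_{L_p([0,1]²)}
  ≥ C' (Σ_{r∈R} (Σ_{(a,b)∈r} c_{a,b}² w_{r,a}² w'_{r,b}²)^{p/2})^{1/p}`. -/
theorem statement14 {A B : Type*} [Countable A] [Countable B] (p : ℝ) (hp : 2 < p)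
    [Fact (1 ≤ ENNReal.ofReal p)]
    (𝒞 : Set (PWPair A)) (𝒟 : Set (PWPair B))
    (h𝒞 : IsPWFamily 𝒞) (h𝒟 : IsPWFamily 𝒟)
    (henv𝒞 : EnvelopeProp 𝒞) (henv𝒟 : EnvelopeProp 𝒟)
    (S : (A → ℝ) → MeasureTheory.Lp ℝ (ENNReal.ofReal p)
      (volume : Measure ↥(Set.Icc (0 : ℝ) 1)))
    (T : (B → ℝ) → MeasureTheory.Lp ℝ (ENNReal.ofReal p)
      (volume : Measure ↥(Set.Icc (0 : ℝ) 1)))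
    (MS cS MT cT : ℝ) (hcS : 0 < cS) (hcT : 0 < cT)
    (hSadd : ∀ x y, famNorm p 𝒞 x < ⊤ → famNorm p 𝒞 y < ⊤ → S (x + y) = S x + S y)
    (hSsmul : ∀ (r : ℝ) (x), famNorm p 𝒞 x < ⊤ → S (r • x) = r • S x)
    (hSub : ∀ x, famNorm p 𝒞 x < ⊤ →
      ENNReal.ofReal ‖S x‖ ≤ ENNReal.ofReal MS * famNorm p 𝒞 x)
    (hSlb : ∀ x, famNorm p 𝒞 x < ⊤ →
      ENNReal.ofReal cS * famNorm p 𝒞 x ≤ ENNReal.ofReal ‖S x‖)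
    (hTadd : ∀ x y, famNorm p 𝒟 x < ⊤ → famNorm p 𝒟 y < ⊤ → T (x + y) = T x + T y)
    (hTsmul : ∀ (r : ℝ) (x), famNorm p 𝒟 x < ⊤ → T (r • x) = r • T x)
    (hTub : ∀ x, famNorm p 𝒟 x < ⊤ →
      ENNReal.ofReal ‖T x‖ ≤ ENNReal.ofReal MT * famNorm p 𝒟 x)
    (hTlb : ∀ x, famNorm p 𝒟 x < ⊤ →
      ENNReal.ofReal cT * famNorm p 𝒟 x ≤ ENNReal.ofReal ‖T x‖) :
    ∃ C' : ℝ, 0 < C' ∧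
      ∀ R : Set (Set (A × B)), IsPartition R →
        ∀ (PR : Set (A × B) → PWPair A) (QR : Set (A × B) → PWPair B),
          (∀ r ∈ R, PR r ∈ 𝒞 ∧ QR r ∈ 𝒟 ∧
            ∃ p₀ ∈ (PR r).1, ∃ q₀ ∈ (QR r).1, r ⊆ p₀ ×ˢ q₀) →
          ∀ coef : A × B →₀ ℝ,
            ENNReal.ofReal C' *
              (∑' r : R,
                (∑' ab : r.1,
                  ENNReal.ofReal ((coef ab.1) ^ 2 *
                    ((PR r.1).2 ab.1.1) ^ 2 * ((QR r.1).2 ab.1.2) ^ 2)) ^ (p / 2)) ^ (1 / p)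
            ≤ MeasureTheory.eLpNorm
                (fun st : ↥(Set.Icc (0 : ℝ) 1) × ↥(Set.Icc (0 : ℝ) 1) =>
                  ∑ ab ∈ coef.support,
                    coef ab * (S (coordVec ab.1)) st.1 * (T (coordVec ab.2)) st.2)
                (ENNReal.ofReal p) (volume.prod volume) :=
  let ⟨C', hC', hle⟩ := statement14_general hp.le h𝒞 h𝒟
    ⟨Real.toNNReal_pos.2 hcS, hSadd, hSsmul, hSub, hSlb⟩
    ⟨Real.toNNReal_pos.2 hcT, hTadd, hTsmul, hTub, hTlb⟩
  ⟨C', hC', fun R hR => hle R hR.2.1⟩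
end
end

section
/- Let p > 2 and let (w_m)_{m∈ℕ} be a sequence in (0,1] with w_m → 0, and for each n ∈ ℕ let Y_n be the corresponding space on (ℕ×ℕ)^n. Then the distance from Y_n to any subspace of L_p goes to infinity with n: there is a sequence (K(n)) of positive reals with K(n) → ∞ such that for every n, every bounded linear map T : Y_n → L_p([0,1]), and every constant c > 0 with ‖Tx‖_{L_p} ≥ c‖x‖_{Y_n} for all x ∈ Y_n, one has ‖T‖/c ≥ K(n). -/
open scoped ENNReal
open MeasureTheory Filter

noncomputable section

variable {α : Type*}

/-- The index set `(ℕ×ℕ)^n`. -/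
abbrev BIdx (n : ℕ) := Fin n → ℕ × ℕ

/-- The partition `P_I` of `(ℕ×ℕ)^n` into the sets obtained by fixing the coordinates
`i_k` for `k ∈ I` and letting the others range over all of `ℕ × ℕ`. -/
def PI {n : ℕ} (I : Finset (Fin n)) : Set (Set (BIdx n)) :=
  {S | ∃ g : Fin n → ℕ × ℕ, S = {i : BIdx n | ∀ k ∈ I, i k = g k}}

/-- The weight `W_I(i) = Π_{k∉I} w_{i_k}`, where `w_{(m,l)} = w_m`. -/
def WI (w : ℕ → ℝ) {n : ℕ} (I : Finset (Fin n)) : BIdx n → ℝ :=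
  fun i => ∏ k ∈ Iᶜ, w (i k).1

/-- The family of partition–weight pairs `{(P_I, W_I) : I ⊆ {1,…,n}}` defining `Y_n`. -/
def famYn (w : ℕ → ℝ) (n : ℕ) : Set (PWPair (BIdx n)) :=
  Set.range fun I : Finset (Fin n) => (PI I, WI w I)

/-- The norm of `Y_n`:  `max_{I ⊆ {1,…,n}} ‖x‖_{P_I,W_I}`. -/
def Ynorm (p : ℝ) (w : ℕ → ℝ) (n : ℕ) (x : BIdx n → ℝ) : ℝ≥0∞ :=
  famNorm p (famYn w n) x

/-!
A space of cotype `q` contains `ℓ_∞^n` only with distortion of order `n ^ (1 / q)`, and Clarkson's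
inequality gives `L_p` cotype `p` when `p ≥ 2`. On the other hand `Y_n` contains `ℓ_∞^n` uniformly.
For each coordinate `k` take a flat vector supported on many indices that differ only in the
coordinate `k`, the other coordinates having tiny weight `w_m`. If `k ∈ I` its `(P_I, W_I)`-norm is
an `ℓ_p`-norm, which is small because flat vectors have `ℓ_p`-norm much smaller than their
`ℓ_2`-norm; if `k ∉ I` and `I ≠ {k}ᶜ`, a factor `w_m` makes it small. Only `I = {k}ᶜ` sees the
vector, so no partition sees more than one of these `n` vectors, and their signed sums stay bounded.
-/

open scoped BigOperators

section Cotype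

variable {E : Type*} [NormedAddCommGroup E]

/-- `E` has (Rademacher) cotype `q` with constant `C`. The signs range uniformly over `ℤˣ = {±1}`,
and the Rademacher average is taken in the `q`-th moment. -/
def HasCotype (q C : ℝ) (E : Type*) [NormedAddCommGroup E] : Prop :=
  ∀ (n : ℕ) (x : Fin n → E),
    (∑ i, ‖x i‖ ^ q) ^ (1 / q) ≤ C * (𝔼 ε : Fin n → ℤˣ, ‖∑ i, ε i • x i‖ ^ q) ^ (1 / q)

theorem HasCotype.rpow_mul_le {q C a b : ℝ} (hE : HasCotype q C E) (hq : 0 < q) (hC : 0 ≤ C)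
    (ha : 0 ≤ a) {n : ℕ} {x : Fin n → E} (hax : ∀ i, a ≤ ‖x i‖)
    (hxb : ∀ ε : Fin n → ℤˣ, ‖∑ i, ε i • x i‖ ≤ b) :
    (n : ℝ) ^ (1 / q) * a ≤ C * b := by
  have hb : 0 ≤ b := (norm_nonneg _).trans (hxb 1)
  have hroot {t : ℝ} (ht : 0 ≤ t) : (t ^ q) ^ (1 / q) = t := by
    rw [one_div, Real.rpow_rpow_inv ht hq.ne']
  calc (n : ℝ) ^ (1 / q) * a
      = (∑ _i : Fin n, a ^ q) ^ (1 / q) := by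
        rw [Finset.sum_const, Finset.card_univ, Fintype.card_fin, nsmul_eq_mul,
          Real.mul_rpow n.cast_nonneg (Real.rpow_nonneg ha q), hroot ha]
    _ ≤ (∑ i, ‖x i‖ ^ q) ^ (1 / q) := by gcongr; exact hax _
    _ ≤ C * (𝔼 ε : Fin n → ℤˣ, ‖∑ i, ε i • x i‖ ^ q) ^ (1 / q) := hE n x
    _ ≤ C * (b ^ q) ^ (1 / q) := by
        gcongr
        exact Finset.expect_le Finset.univ_nonempty fun ε _ =>
          Real.rpow_le_rpow (norm_nonneg _) (hxb ε) hq.le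
    _ = C * b := by rw [hroot hb]

theorem sum_norm_rpow_le_expect_norm_rpow {p : ℝ}
    (h : ∀ u v : E, 2 * (‖u‖ ^ p + ‖v‖ ^ p) ≤ ‖u + v‖ ^ p + ‖u - v‖ ^ p) {n : ℕ}
    (x : Fin n → E) :
    ∑ i, ‖x i‖ ^ p ≤ 𝔼 ε : Fin n → ℤˣ, ‖∑ i, ε i • x i‖ ^ p := by
  induction n with
  | zero => simpa using Real.zero_rpow_nonneg p
  | succ n ih =>
    have hsigns (v : E) : ‖x 0‖ ^ p + ‖v‖ ^ p ≤ 𝔼 s : ℤˣ, ‖s • x 0 + v‖ ^ p := by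
      have hv := h v (x 0)
      rw [add_comm v, ← neg_add_eq_sub] at hv
      have haverage : 𝔼 s : ℤˣ, ‖s • x 0 + v‖ ^ p =
          (‖x 0 + v‖ ^ p + ‖-x 0 + v‖ ^ p) / 2 := by
        rw [Fintype.expect_eq_sum_div_card, UnitsInt.univ]
        simp
      rw [haverage]
      linarith
    calc ∑ i, ‖x i‖ ^ p
        = ‖x 0‖ ^ p + ∑ i, ‖x (Fin.succ i)‖ ^ p := Fin.sum_univ_succ _
      _ ≤ ‖x 0‖ ^ p + 𝔼 ε : Fin n → ℤˣ, ‖∑ i, ε i • x (Fin.succ i)‖ ^ p := by gcongr; exact ih _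
      _ = 𝔼 ε : Fin n → ℤˣ, (‖x 0‖ ^ p + ‖∑ i, ε i • x (Fin.succ i)‖ ^ p) := by
        rw [Finset.expect_add_distrib, Fintype.expect_const]
      _ ≤ 𝔼 ε : Fin n → ℤˣ, 𝔼 s : ℤˣ, ‖s • x 0 + ∑ i, ε i • x (Fin.succ i)‖ ^ p :=
        Finset.expect_le_expect fun ε _ => hsigns _
      _ = 𝔼 ε : Fin (n + 1) → ℤˣ, ‖∑ i, ε i • x i‖ ^ p := by
        rw [Finset.expect_comm, ← Finset.expect_product', Finset.univ_product_univ]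
        refine Fintype.expect_equiv (Fin.consEquiv fun _ => ℤˣ) _ _ fun ε => ?_
        simp [Fin.consEquiv, Fin.sum_univ_succ]

theorem hasCotype_one_of_two_mul_norm_rpow_add_le {p : ℝ} (hp : 0 ≤ p)
    (h : ∀ u v : E, 2 * (‖u‖ ^ p + ‖v‖ ^ p) ≤ ‖u + v‖ ^ p + ‖u - v‖ ^ p) :
    HasCotype p 1 E := fun n x => by
  rw [one_mul]
  gcongr
  exact sum_norm_rpow_le_expect_norm_rpow h x

end Cotype

section Clarkson

variable {H : Type*} [NormedAddCommGroup H] {p : ℝ} {Ω : Type*} [MeasurableSpace Ω] {μ : Measure Ω}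

theorem Lp_norm_rpow_eq_integral (hp : 0 < p) (f : Lp H (ENNReal.ofReal p) μ) :
    ‖f‖ ^ p = ∫ t, ‖f t‖ ^ p ∂μ := by
  have hf := lpNorm_eq_integral_norm_rpow_toReal (p := ENNReal.ofReal p) (by simpa using hp)
    ENNReal.ofReal_ne_top (Lp.aestronglyMeasurable f)
  rw [ENNReal.toReal_ofReal hp.le] at hf
  rw [Lp.norm_def, toReal_eLpNorm (Lp.aestronglyMeasurable f), hf,
    Real.rpow_inv_rpow (integral_nonneg fun t => by positivity) hp.ne']

variable [InnerProductSpace ℝ H]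

theorem two_mul_norm_rpow_add_le (hp : 2 ≤ p) (u v : H) :
    2 * (‖u‖ ^ p + ‖v‖ ^ p) ≤ ‖u + v‖ ^ p + ‖u - v‖ ^ p := by
  have hq : 1 ≤ p / 2 := by linarith
  have hpow (z : H) : ‖z‖ ^ p = (‖z‖ ^ 2) ^ (p / 2) := by
    rw [← Real.rpow_natCast_mul (norm_nonneg z), Nat.cast_ofNat, mul_div_cancel₀ p two_ne_zero]
  have hsuper : (‖u‖ ^ 2) ^ (p / 2) + (‖v‖ ^ 2) ^ (p / 2) ≤ (‖u‖ ^ 2 + ‖v‖ ^ 2) ^ (p / 2) :=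
    Real.add_rpow_le_rpow_add (sq_nonneg _) (sq_nonneg _) hq
  have hconvex := (convexOn_rpow hq).2 (Set.mem_Ici.2 (sq_nonneg ‖u + v‖))
    (Set.mem_Ici.2 (sq_nonneg ‖u - v‖)) one_half_pos.le one_half_pos.le (add_halves 1)
  have hparallelogram : (1 / 2 : ℝ) • ‖u + v‖ ^ 2 + (1 / 2 : ℝ) • ‖u - v‖ ^ 2 =
      ‖u‖ ^ 2 + ‖v‖ ^ 2 := by
    simp only [smul_eq_mul]
    linarith [parallelogram_law_with_norm ℝ u v]
  rw [hparallelogram, smul_eq_mul, smul_eq_mul] at hconvex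
  simp only [hpow]
  linarith

theorem Lp_two_mul_norm_rpow_add_le (hp : 2 ≤ p) (f g : Lp H (ENNReal.ofReal p) μ) :
    2 * (‖f‖ ^ p + ‖g‖ ^ p) ≤ ‖f + g‖ ^ p + ‖f - g‖ ^ p := by
  have hp0 : 0 < p := by linarith
  have hint (h : Lp H (ENNReal.ofReal p) μ) : Integrable (fun t => ‖h t‖ ^ p) μ := by
    simpa [hp0.le] using (Lp.memLp h).integrable_norm_rpow (by simpa using hp0)
      ENNReal.ofReal_ne_top
  simp only [Lp_norm_rpow_eq_integral hp0]
  rw [← integral_add (hint f) (hint g), ← integral_add (hint _) (hint _), ← integral_const_mul]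
  refine integral_mono_ae (((hint f).add (hint g)).const_mul 2) ((hint _).add (hint _)) ?_
  filter_upwards [Lp.coeFn_add f g, Lp.coeFn_sub f g] with t hadd hsub
  rw [hadd, hsub]
  exact two_mul_norm_rpow_add_le hp (f t) (g t)

theorem hasCotype_Lp (hp : 2 ≤ p) [Fact (1 ≤ ENNReal.ofReal p)] :
    HasCotype p 1 (Lp H (ENNReal.ofReal p) μ) :=
  hasCotype_one_of_two_mul_norm_rpow_add_le (by linarith) (Lp_two_mul_norm_rpow_add_le hp)

end Clarkson

section EllNorm

variable {ι κ : Type*} {r s : ℝ}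

/-- The `ℓ_r`-norm of a family in `[0,∞]`. With it the mixed norm `‖x‖_{P,W}` becomes the
`ℓ_p`-norm over the blocks of the `ℓ_2`-norms inside the blocks. -/
def ellNorm (r : ℝ) (f : ι → ℝ≥0∞) : ℝ≥0∞ := (∑' i, f i ^ r) ^ (1 / r)

theorem ellNorm_rpow (hr : r ≠ 0) (f : ι → ℝ≥0∞) : ellNorm r f ^ r = ∑' i, f i ^ r := by
  rw [ellNorm, one_div, ENNReal.rpow_inv_rpow hr]

theorem ellNorm_zero (hr : 0 < r) : ellNorm r (0 : ι → ℝ≥0∞) = 0 := by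
  simp [ellNorm, hr]

theorem ellNorm_mono (hr : 0 ≤ r) {f g : ι → ℝ≥0∞} (h : ∀ i, f i ≤ g i) :
    ellNorm r f ≤ ellNorm r g := by
  unfold ellNorm
  gcongr
  exact h _

theorem ellNorm_add_le (hr : 1 ≤ r) (f g : ι → ℝ≥0∞) :
    ellNorm r (f + g) ≤ ellNorm r f + ellNorm r g := by
  let _ : MeasurableSpace ι := ⊤
  simpa only [ellNorm, lintegral_count] using
    ENNReal.lintegral_Lp_add_le (μ := Measure.count) (f := f) (g := g)
      measurable_from_top.aemeasurable measurable_from_top.aemeasurable hr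

theorem ellNorm_comp_injective (hr : 0 < r) {f : ι → ℝ≥0∞} {e : κ → ι}
    (he : Function.Injective e) (hf : Function.support f ⊆ Set.range e) :
    ellNorm r (fun k => f (e k)) = ellNorm r f := by
  refine congrArg (· ^ (1 / r)) (he.tsum_eq (f := fun i => f i ^ r) fun i hi => hf ?_)
  contrapose! hi
  simp [Function.notMem_support.1 hi, hr]

theorem ellNorm_subtype (hr : 0 < r) {f : ι → ℝ≥0∞} {N : Set ι} (hf : Function.support f ⊆ N) :
    ellNorm r (fun i : N => f i) = ellNorm r f :=
  ellNorm_comp_injective hr Subtype.val_injective (by rwa [Subtype.range_val])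

theorem ellNorm_eq_apply (hr : 0 < r) {f : ι → ℝ≥0∞} {i : ι} (hf : Function.support f ⊆ {i}) :
    ellNorm r f = f i := by
  rw [← ellNorm_subtype hr hf, ellNorm, tsum_fintype, Fintype.sum_subsingleton _ ⟨i, rfl⟩, one_div,
    ENNReal.rpow_rpow_inv hr.ne']

theorem ellNorm_eq_ellNorm (hr : 0 < r) (hs : 0 < s) {f : ι → ℝ≥0∞}
    (hf : (Function.support f).Subsingleton) : ellNorm r f = ellNorm s f := by
  rcases hf.eq_empty_or_singleton with h | ⟨i, h⟩
  · rw [Function.support_eq_empty_iff.1 h, ellNorm_zero hr, ellNorm_zero hs]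
  · rw [ellNorm_eq_apply hr h.subset, ellNorm_eq_apply hs h.subset]

theorem ellNorm_partition (hr : r ≠ 0) {P : Set (Set ι)} (hP : IsPartition P) (f : ι → ℝ≥0∞) :
    ellNorm r (fun N : P => ellNorm r fun i : N.1 => f i) = ellNorm r f := by
  refine congrArg (· ^ (1 / r)) ?_
  simp only [ellNorm_rpow hr]
  calc ∑' (N : P) (i : N.1), f i ^ r
      = ∑' i : ⋃ N ∈ P, N, f i ^ r :=
        (ENNReal.tsum_biUnion' (f := fun i => f i ^ r) (t := id) hP.2.1).symm
    _ = ∑' i, f i ^ r := by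
        rw [← Set.sUnion_eq_biUnion, hP.2.2, tsum_univ fun i => f i ^ r]

theorem ellNorm_const_fin (hr : 0 < r) (n : ℕ) (a : ℝ) :
    ellNorm r (fun _ : Fin n => ‖a‖ₑ) = ‖(n : ℝ) ^ (1 / r) * a‖ₑ := by
  have hcoeff : ‖(n : ℝ) ^ (1 / r)‖ₑ = (n : ℝ≥0∞) ^ (1 / r) := by
    rw [Real.enorm_of_nonneg (by positivity),
      ← ENNReal.ofReal_rpow_of_nonneg n.cast_nonneg (by positivity), ENNReal.ofReal_natCast]
  rw [ellNorm, tsum_fintype, Finset.sum_const, Finset.card_univ, Fintype.card_fin, nsmul_eq_mul,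
    ENNReal.mul_rpow_of_nonneg _ _ (by positivity), enorm_mul, hcoeff, one_div,
    ENNReal.rpow_rpow_inv hr.ne']

end EllNorm

section PWNorm

variable {p : ℝ} {P : Set (Set α)} {W x : α → ℝ}

theorem pwNorm_eq_ellNorm (p : ℝ) (P : Set (Set α)) (W x : α → ℝ) :
    pwNorm p P W x = ellNorm p fun N : P => ellNorm 2 fun j : N.1 => ‖x j * W j‖ₑ := by
  have hsq (j : α) : ENNReal.ofReal (x j ^ 2 * W j ^ 2) = ‖x j * W j‖ₑ ^ (2 : ℝ) := by
    rw [← mul_pow, ← Real.enorm_of_nonneg (sq_nonneg _), enorm_pow, ENNReal.rpow_ofNat]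
  simp only [pwNorm, ellNorm, hsq, ← ENNReal.rpow_mul, one_div_mul_eq_div]

theorem pwNorm_zero (hp : 0 < p) : pwNorm p P W 0 = 0 := by
  simp [pwNorm, hp]

theorem pwNorm_neg (x : α → ℝ) : pwNorm p P W (-x) = pwNorm p P W x := by
  simp [pwNorm]

theorem pwNorm_add_le (hp : 1 ≤ p) (x y : α → ℝ) :
    pwNorm p P W (x + y) ≤ pwNorm p P W x + pwNorm p P W y := by
  simp only [pwNorm_eq_ellNorm]
  refine (ellNorm_mono (by linarith) fun N => ?_).trans (ellNorm_add_le hp _ _)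
  refine (ellNorm_mono zero_le_two fun j => ?_).trans (ellNorm_add_le one_le_two _ _)
  rw [Pi.add_apply, add_mul]
  exact enorm_add_le _ _

theorem pwNorm_sum_units_smul_le (hp : 1 ≤ p) {ι : Type*} (s : Finset ι) (ε : ι → ℤˣ)
    (x : ι → α → ℝ) :
    pwNorm p P W (∑ i ∈ s, ε i • x i) ≤ ∑ i ∈ s, pwNorm p P W (x i) := by
  refine (Finset.le_sum_of_subadditive _ (pwNorm_zero (by linarith)).le (pwNorm_add_le hp) s
    _).trans_eq (Finset.sum_congr rfl fun i _ => ?_)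
  rcases Int.units_eq_one_or (ε i) with h | h <;> simp [h, pwNorm_neg]

theorem support_enorm_mul_subset (x W : α → ℝ) :
    (Function.support fun j => ‖x j * W j‖ₑ) ⊆ Function.support x := by
  intro j hj
  contrapose! hj
  simp [Function.notMem_support.1 hj]

theorem pwNorm_of_support_subset (hp : 0 < p) (hP : P.PairwiseDisjoint id) {N : Set α}
    (hN : N ∈ P) (hx : Function.support x ⊆ N) :
    pwNorm p P W x = ellNorm 2 fun j => ‖x j * W j‖ₑ := by
  rw [pwNorm_eq_ellNorm, ellNorm_eq_apply hp (i := ⟨N, hN⟩),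
    ellNorm_subtype two_pos ((support_enorm_mul_subset x W).trans hx)]
  rintro ⟨N', hN'⟩ hne
  contrapose! hne
  have hdisj : Disjoint N' N := hP hN' hN fun h => hne (Subtype.ext h)
  have hzero (j : N') : ‖x j * W j‖ₑ = 0 := by
    have hj : x j = 0 := Function.notMem_support.1 fun h =>
      Set.disjoint_left.1 hdisj j.2 (hx h)
    rw [hj, zero_mul, enorm_zero]
  simp only [Function.mem_support, hzero, not_not]
  exact ellNorm_zero two_pos

theorem pwNorm_of_support_inter_subsingleton (hp : 0 < p) (hP : IsPartition P)
    (hx : ∀ N ∈ P, (Function.support x ∩ N).Subsingleton) :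
    pwNorm p P W x = ellNorm p fun j => ‖x j * W j‖ₑ := by
  rw [pwNorm_eq_ellNorm, ← ellNorm_partition hp.ne' hP]
  congr with N
  refine ellNorm_eq_ellNorm two_pos hp fun i hi j hj => Subtype.ext ?_
  exact hx N N.2 ⟨support_enorm_mul_subset x W hi, i.2⟩ ⟨support_enorm_mul_subset x W hj, j.2⟩

theorem pwNorm_single [DecidableEq α] (hp : 0 < p) (hP : IsPartition P) (W : α → ℝ) (i : α)
    (a : ℝ) :
    pwNorm p P W (Pi.single i a) = ‖a * W i‖ₑ := by
  have hsupp : Function.support (Pi.single i a : α → ℝ) ⊆ {i} := Pi.support_single_subset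
  rw [pwNorm_of_support_inter_subsingleton hp hP fun N _ =>
    Set.subsingleton_singleton.anti (Set.inter_subset_left.trans hsupp),
    ellNorm_eq_apply hp ((support_enorm_mul_subset _ W).trans hsupp), Pi.single_eq_same]

end PWNorm

section BlockPartitions

variable {n : ℕ} {w : ℕ → ℝ}

theorem isPartition_PI (I : Finset (Fin n)) : IsPartition (PI I) := by
  refine ⟨?_, ?_, Set.eq_univ_of_forall fun i => ⟨_, ⟨i, rfl⟩, fun _ _ => rfl⟩⟩
  · rintro _ ⟨g, rfl⟩
    exact ⟨g, fun _ _ => rfl⟩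
  · rintro _ ⟨g, rfl⟩ _ ⟨g', rfl⟩ hne
    refine Set.disjoint_left.2 fun i hi hi' => hne ?_
    ext j
    exact forall₂_congr fun k hk => by rw [← hi k hk, ← hi' k hk]

theorem WI_nonneg (hw : IsWeight w) (I : Finset (Fin n)) (i : BIdx n) : 0 ≤ WI w I i :=
  Finset.prod_nonneg fun _ _ => (hw _).1.le

theorem WI_le_one (hw : IsWeight w) (I : Finset (Fin n)) (i : BIdx n) : WI w I i ≤ 1 :=
  Finset.prod_le_one (fun _ _ => (hw _).1.le) fun _ _ => (hw _).2

theorem WI_le_of_disjoint (hw : IsWeight w) {I S : Finset (Fin n)} (h : Disjoint S I)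
    (i : BIdx n) : WI w I i ≤ ∏ k ∈ S, w (i k).1 :=
  Finset.prod_le_prod_of_subset_of_le_one (Finset.subset_compl_iff_disjoint_right.2 h)
    (fun _ _ => (hw _).1.le) fun _ _ _ => (hw _).2

end BlockPartitions

section Ynorm

variable {p : ℝ} {w : ℕ → ℝ} {n : ℕ}

theorem Ynorm_eq_iSup (p : ℝ) (w : ℕ → ℝ) (x : BIdx n → ℝ) :
    Ynorm p w n x = ⨆ I : Finset (Fin n), pwNorm p (PI I) (WI w I) x := by
  rw [Ynorm, famNorm, famYn, iSup_range]

theorem pwNorm_le_Ynorm (I : Finset (Fin n)) (x : BIdx n → ℝ) :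
    pwNorm p (PI I) (WI w I) x ≤ Ynorm p w n x := by
  rw [Ynorm_eq_iSup]
  exact le_iSup (fun I => pwNorm p (PI I) (WI w I) x) I

theorem Ynorm_zero (hp : 0 < p) : Ynorm p w n 0 = 0 := by
  simp [Ynorm_eq_iSup, pwNorm_zero hp]

theorem Ynorm_neg (x : BIdx n → ℝ) : Ynorm p w n (-x) = Ynorm p w n x := by
  simp only [Ynorm_eq_iSup, pwNorm_neg]

theorem Ynorm_add_le (hp : 1 ≤ p) (x y : BIdx n → ℝ) :
    Ynorm p w n (x + y) ≤ Ynorm p w n x + Ynorm p w n y := by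
  rw [Ynorm_eq_iSup p w (x + y)]
  exact iSup_le fun I => (pwNorm_add_le hp x y).trans
    (add_le_add (pwNorm_le_Ynorm I x) (pwNorm_le_Ynorm I y))

theorem Ynorm_single (hp : 0 < p) (hw : IsWeight w) (i : BIdx n) :
    Ynorm p w n (Pi.single i 1) = 1 := by
  have hpw (I : Finset (Fin n)) : pwNorm p (PI I) (WI w I) (Pi.single i 1) = ‖WI w I i‖ₑ := by
    rw [pwNorm_single hp (isPartition_PI I), one_mul]
  refine le_antisymm ?_ ?_
  · rw [Ynorm_eq_iSup]
    refine iSup_le fun I => (hpw I).trans_le ?_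
    rw [Real.enorm_of_nonneg (WI_nonneg hw I i), ENNReal.ofReal_le_one]
    exact WI_le_one hw I i
  · simpa [hpw, WI] using
      pwNorm_le_Ynorm (p := p) (w := w) Finset.univ (Pi.single i 1 : BIdx n → ℝ)

/-- The space `Y_n` of vectors of finite norm, as an additive group. Cotype only involves signed
sums, so the scalar multiplication is left out. -/
def ySpace (hp : 1 ≤ p) (w : ℕ → ℝ) (n : ℕ) : AddSubgroup (BIdx n → ℝ) where
  carrier := {x | Ynorm p w n x < ⊤}
  zero_mem' := (Ynorm_zero (by linarith)).trans_lt ENNReal.zero_lt_top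
  add_mem' hx hy := (Ynorm_add_le hp _ _).trans_lt (ENNReal.add_lt_top.2 ⟨hx, hy⟩)
  neg_mem' {x} hx := (Ynorm_neg x).trans_lt hx

theorem Ynorm_sum_units_smul_le_two (hp : 1 ≤ p) {x : Fin n → BIdx n → ℝ}
    (hdiag : ∀ k, pwNorm p (PI {k}ᶜ) (WI w {k}ᶜ) (x k) ≤ 1)
    (hoff : ∀ k I, I ≠ {k}ᶜ → pwNorm p (PI I) (WI w I) (x k) ≤ (n : ℝ≥0∞)⁻¹) (ε : Fin n → ℤˣ) :
    Ynorm p w n (∑ k, ε k • x k) ≤ 2 := by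
  rw [Ynorm_eq_iSup]
  refine iSup_le fun I => (pwNorm_sum_units_smul_le hp _ ε x).trans ?_
  have hterm (k : Fin n) : pwNorm p (PI I) (WI w I) (x k) ≤
      (if I = {k}ᶜ then 1 else 0) + (n : ℝ≥0∞)⁻¹ := by
    split_ifs with hI
    · subst hI
      exact (hdiag k).trans le_self_add
    · exact (hoff k I hI).trans le_add_self
  have hone : (Finset.univ.filter fun k : Fin n => I = {k}ᶜ).card ≤ 1 :=
    Finset.card_le_one.2 fun a ha b hb => by
      simpa using (Finset.mem_filter.1 ha).2.symm.trans (Finset.mem_filter.1 hb).2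
  calc ∑ k, pwNorm p (PI I) (WI w I) (x k)
      ≤ ∑ k : Fin n, ((if I = {k}ᶜ then 1 else 0) + (n : ℝ≥0∞)⁻¹) :=
        Finset.sum_le_sum fun k _ => hterm k
    _ = (Finset.univ.filter fun k : Fin n => I = {k}ᶜ).card + n * (n : ℝ≥0∞)⁻¹ := by
        rw [Finset.sum_add_distrib, Finset.sum_boole, Finset.sum_const, Finset.card_univ,
          Fintype.card_fin, nsmul_eq_mul]
    _ ≤ 1 + 1 := by
        gcongr
        · exact_mod_cast hone
        · exact ENNReal.mul_inv_le_one _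
    _ = 2 := one_add_one_eq_two

end Ynorm

section Spread

variable {p : ℝ} {w : ℕ → ℝ} {n m R : ℕ} {κ : ℝ} {k : Fin n}

/-- The index with `k`-th coordinate `(0, l)` and all other coordinates `(m, 0)`: as `l` varies,
the `k`-th coordinate keeps the weight `w 0` and the others keep the weight `w m`. -/
def spreadIdx (m : ℕ) (k : Fin n) (l : ℕ) : BIdx n :=
  Function.update (fun _ => (m, 0)) k (0, l)

theorem spreadIdx_injective (m : ℕ) (k : Fin n) : Function.Injective (spreadIdx m k) := by
  intro l l' h
  simpa [spreadIdx] using congrFun h k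

theorem spreadIdx_apply_of_ne (m l : ℕ) {a : Fin n} (h : a ≠ k) : spreadIdx m k l a = (m, 0) :=
  Function.update_of_ne h _ _

theorem WI_spreadIdx_compl_singleton (w : ℕ → ℝ) (m : ℕ) (k : Fin n) (l : ℕ) :
    WI w {k}ᶜ (spreadIdx m k l) = w 0 := by
  simp [WI, spreadIdx]

theorem WI_spreadIdx_le (hw : IsWeight w) {I : Finset (Fin n)} (hk : k ∉ I) (hI : I ≠ {k}ᶜ)
    (m l : ℕ) : WI w I (spreadIdx m k l) ≤ w 0 * w m := by
  obtain ⟨a, ha, hak⟩ : ∃ a ∉ I, a ≠ k := by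
    by_contra! h
    refine hI (Finset.ext fun a => ?_)
    rw [Finset.mem_compl, Finset.mem_singleton]
    exact ⟨fun ha hak => hk (hak ▸ ha), fun hak => by_contra fun ha => hak (h a ha)⟩
  refine (WI_le_of_disjoint hw (S := {k, a}) (by simp [hk, ha]) _).trans_eq ?_
  rw [Finset.prod_pair hak.symm, spreadIdx_apply_of_ne m l hak]
  simp [spreadIdx]

/-- The flat vector spread along the `k`-th coordinate: it equals `κ` at `spreadIdx m k l` for
`l < R`, and zero elsewhere. For suitable `κ`, `m` and `R` only `P_I` with `I = {k}ᶜ` sees it. -/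
def spreadVec (κ : ℝ) (m R : ℕ) (k : Fin n) : BIdx n → ℝ :=
  Function.extend (fun l : Fin R => spreadIdx m k l) (fun _ => κ) 0

theorem spreadIdx_comp_val_injective (m R : ℕ) (k : Fin n) :
    Function.Injective fun l : Fin R => spreadIdx m k l :=
  (spreadIdx_injective m k).comp Fin.val_injective

theorem spreadVec_spreadIdx (κ : ℝ) (m : ℕ) (k : Fin n) (l : Fin R) :
    spreadVec κ m R k (spreadIdx m k l) = κ :=
  (spreadIdx_comp_val_injective m R k).extend_apply _ _ l

theorem support_spreadVec_subset (κ : ℝ) (m R : ℕ) (k : Fin n) :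
    Function.support (spreadVec κ m R k) ⊆ Set.range fun l : Fin R => spreadIdx m k l := by
  intro i hi
  contrapose! hi
  exact Function.notMem_support.2 (Function.extend_apply' _ _ i hi)

theorem ellNorm_spreadVec {r : ℝ} (hr : 0 < r) (κ : ℝ) (m R : ℕ) (k : Fin n) (V : BIdx n → ℝ) :
    ellNorm r (fun i => ‖spreadVec κ m R k i * V i‖ₑ) =
      ellNorm r fun l : Fin R => ‖κ * V (spreadIdx m k l)‖ₑ := by
  rw [← ellNorm_comp_injective hr (spreadIdx_comp_val_injective m R k)
    ((support_enorm_mul_subset _ V).trans (support_spreadVec_subset κ m R k))]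
  simp only [spreadVec_spreadIdx]

theorem ellNorm_spreadVec_le {r v : ℝ} (hr : 0 < r) {V : BIdx n → ℝ}
    (hV : ∀ l, |V (spreadIdx m k l)| ≤ v) :
    ellNorm r (fun i => ‖spreadVec κ m R k i * V i‖ₑ) ≤ ‖(R : ℝ) ^ (1 / r) * (κ * v)‖ₑ := by
  rw [ellNorm_spreadVec hr, ← ellNorm_const_fin hr]
  refine ellNorm_mono hr.le fun l => ?_
  rw [enorm_mul, enorm_mul]
  gcongr
  exact enorm_le_iff_norm_le.2 ((hV l).trans (le_abs_self v))

theorem pwNorm_spreadVec_of_notMem (hp : 0 < p) {I : Finset (Fin n)} (hk : k ∉ I) :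
    pwNorm p (PI I) (WI w I) (spreadVec κ m R k) =
      ellNorm 2 fun i => ‖spreadVec κ m R k i * WI w I i‖ₑ := by
  refine pwNorm_of_support_subset hp (isPartition_PI I).2.1 ⟨fun _ => (m, 0), rfl⟩
    ((support_spreadVec_subset κ m R k).trans ?_)
  rintro _ ⟨l, rfl⟩ a ha
  exact spreadIdx_apply_of_ne m l fun hak => hk (hak ▸ ha)

theorem pwNorm_spreadVec_of_mem (hp : 0 < p) {I : Finset (Fin n)} (hk : k ∈ I) :
    pwNorm p (PI I) (WI w I) (spreadVec κ m R k) =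
      ellNorm p fun i => ‖spreadVec κ m R k i * WI w I i‖ₑ := by
  refine pwNorm_of_support_inter_subsingleton hp (isPartition_PI I) ?_
  rintro _ ⟨g, rfl⟩ i ⟨hi, hig⟩ j ⟨hj, hjg⟩
  obtain ⟨l, rfl⟩ := support_spreadVec_subset κ m R k hi
  obtain ⟨l', rfl⟩ := support_spreadVec_subset κ m R k hj
  have hll' : (0, (l : ℕ)) = (0, (l' : ℕ)) := by
    simpa [spreadIdx] using (hig k hk).trans (hjg k hk).symm
  simp only [(Prod.mk.inj hll').2]

theorem pwNorm_spreadVec_compl_singleton (hp : 0 < p) (w : ℕ → ℝ) (κ : ℝ) (m R : ℕ) (k : Fin n) :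
    pwNorm p (PI {k}ᶜ) (WI w {k}ᶜ) (spreadVec κ m R k) =
      ‖(R : ℝ) ^ (1 / 2 : ℝ) * (κ * w 0)‖ₑ := by
  rw [pwNorm_spreadVec_of_notMem hp (by simp), ellNorm_spreadVec two_pos]
  simp only [WI_spreadIdx_compl_singleton]
  exact ellNorm_const_fin two_pos R _

theorem pwNorm_spreadVec_le_of_notMem (hp : 0 < p) (hw : IsWeight w) {I : Finset (Fin n)}
    (hk : k ∉ I) (hI : I ≠ {k}ᶜ) :
    pwNorm p (PI I) (WI w I) (spreadVec κ m R k) ≤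
      ‖(R : ℝ) ^ (1 / 2 : ℝ) * (κ * (w 0 * w m))‖ₑ := by
  rw [pwNorm_spreadVec_of_notMem hp hk]
  refine ellNorm_spreadVec_le two_pos fun l => ?_
  rw [abs_of_nonneg (WI_nonneg hw I _)]
  exact WI_spreadIdx_le hw hk hI m l

theorem pwNorm_spreadVec_le_of_mem (hp : 0 < p) (hw : IsWeight w) {I : Finset (Fin n)}
    (hk : k ∈ I) :
    pwNorm p (PI I) (WI w I) (spreadVec κ m R k) ≤ ‖(R : ℝ) ^ (1 / p) * κ‖ₑ := by
  rw [pwNorm_spreadVec_of_mem hp hk]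
  refine (ellNorm_spreadVec_le (v := 1) hp fun l => ?_).trans_eq (by rw [mul_one])
  rw [abs_of_nonneg (WI_nonneg hw I _)]
  exact WI_le_one hw I _

theorem exists_sqrt_mul_eq_one_and_rpow_mul_le (hp : 2 < p) {v δ : ℝ} (hv : 0 < v)
    (hδ : 0 < δ) :
    ∃ (R : ℕ) (κ : ℝ), 0 ≤ κ ∧ (R : ℝ) ^ (1 / 2 : ℝ) * (κ * v) = 1 ∧
      (R : ℝ) ^ (1 / p) * κ ≤ δ := by
  have hexp : 0 < 1 / 2 - 1 / p := sub_pos.2 (one_div_lt_one_div_of_lt two_pos hp)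
  have hlim : Tendsto (fun R : ℕ => (R : ℝ) ^ (-(1 / 2 - 1 / p)) * v⁻¹) atTop (nhds 0) := by
    simpa using ((tendsto_rpow_neg_atTop hexp).comp tendsto_natCast_atTop_atTop).mul_const v⁻¹
  obtain ⟨R, hRδ, hR⟩ := ((hlim.eventually_le_const hδ).and (eventually_gt_atTop 0)).exists
  have hR' : (0 : ℝ) < R := by exact_mod_cast hR
  refine ⟨R, (R : ℝ) ^ (-(1 / 2) : ℝ) * v⁻¹, by positivity, ?_, ?_⟩
  · rw [inv_mul_cancel_right₀ hv.ne', ← Real.rpow_add hR', add_neg_cancel, Real.rpow_zero]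
  · refine le_of_eq_of_le ?_ hRδ
    rw [← mul_assoc, ← Real.rpow_add hR']
    ring_nf

theorem exists_pwNorm_eq_one_and_pwNorm_le (hp : 2 < p) (hw : IsWeight w)
    (hw0 : ∀ δ > 0, ∃ m, w m ≤ δ) (n : ℕ) {δ : ℝ} (hδ : 0 < δ) :
    ∃ x : Fin n → BIdx n → ℝ, (∀ k, pwNorm p (PI {k}ᶜ) (WI w {k}ᶜ) (x k) = 1) ∧
      ∀ k I, I ≠ {k}ᶜ → pwNorm p (PI I) (WI w I) (x k) ≤ ENNReal.ofReal δ := by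
  have hp0 : 0 < p := by linarith
  obtain ⟨m, hm⟩ := hw0 δ hδ
  obtain ⟨R, κ, hκ, hdiag, hoff⟩ := exists_sqrt_mul_eq_one_and_rpow_mul_le hp (hw 0).1 hδ
  refine ⟨spreadVec κ m R, fun k => ?_, fun k I hI => ?_⟩
  · rw [pwNorm_spreadVec_compl_singleton hp0, hdiag, enorm_one]
  by_cases hk : k ∈ I
  · refine (pwNorm_spreadVec_le_of_mem hp0 hw hk).trans ?_
    rw [Real.enorm_of_nonneg (by positivity)]
    exact ENNReal.ofReal_le_ofReal hoff
  · refine (pwNorm_spreadVec_le_of_notMem hp0 hw hk hI).trans ?_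
    rw [← mul_assoc κ, ← mul_assoc, hdiag, one_mul, Real.enorm_of_nonneg (hw m).1.le]
    exact ENNReal.ofReal_le_ofReal hm

theorem exists_Ynorm_eq_one_and_sum_units_smul_le_two (hp : 2 < p) (hw : IsWeight w)
    (hw0 : ∀ δ > 0, ∃ m, w m ≤ δ) (n : ℕ) :
    ∃ x : Fin n → BIdx n → ℝ, (∀ k, Ynorm p w n (x k) = 1) ∧
      ∀ ε : Fin n → ℤˣ, Ynorm p w n (∑ k, ε k • x k) ≤ 2 := by
  obtain ⟨x, hdiag, hoff⟩ :=
    exists_pwNorm_eq_one_and_pwNorm_le hp hw hw0 n (Nat.one_div_pos_of_nat (α := ℝ) (n := n))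
  have hδ : ENNReal.ofReal (1 / ((n : ℝ) + 1)) = ((n : ℝ≥0∞) + 1)⁻¹ := by
    rw [one_div, ENNReal.ofReal_inv_of_pos n.cast_add_one_pos,
      ENNReal.ofReal_add n.cast_nonneg zero_le_one, ENNReal.ofReal_natCast, ENNReal.ofReal_one]
  rw [hδ] at hoff
  refine ⟨x, fun k => le_antisymm ?_ ((hdiag k).ge.trans (pwNorm_le_Ynorm _ _)),
    Ynorm_sum_units_smul_le_two (by linarith) (fun k => (hdiag k).le) fun k I hI =>
      (hoff k I hI).trans (ENNReal.inv_le_inv.2 le_self_add)⟩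
  rw [Ynorm_eq_iSup]
  refine iSup_le fun I => ?_
  by_cases hI : I = {k}ᶜ
  · subst hI
    exact (hdiag k).le
  · exact (hoff k I hI).trans (ENNReal.inv_le_one.2 le_add_self)

end Spread

section Distortion

variable {p q C M c : ℝ} {w : ℕ → ℝ} {n : ℕ} {E : Type*} [NormedAddCommGroup E]

theorem le_of_Ynorm_bounds (hp : 1 ≤ p) (hw : IsWeight w) (hc : 0 < c) {T : ySpace hp w n → E}
    (hM : ∀ y : ySpace hp w n, ENNReal.ofReal ‖T y‖ ≤ ENNReal.ofReal M * Ynorm p w n y)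
    (hcT : ∀ y : ySpace hp w n, ENNReal.ofReal c * Ynorm p w n y ≤ ENNReal.ofReal ‖T y‖) :
    c ≤ M := by
  have hsingle := Ynorm_single (by linarith : 0 < p) hw (0 : BIdx n)
  let e : ySpace hp w n := ⟨Pi.single 0 1, hsingle.trans_lt ENNReal.one_lt_top⟩
  have hcM := (hcT e).trans (hM e)
  rw [hsingle, mul_one, mul_one] at hcM
  exact (ENNReal.ofReal_le_ofReal_iff'.1 hcM).resolve_right hc.not_ge

theorem max_one_rpow_div_le_div (hp : 2 < p) (hw : IsWeight w) (hw0 : ∀ δ > 0, ∃ m, w m ≤ δ)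
    (hE : HasCotype q C E) (hq : 0 < q) (hC : 0 < C) (hc : 0 < c)
    (T : ySpace (one_le_two.trans hp.le) w n →+ E)
    (hM : ∀ y : ySpace (one_le_two.trans hp.le) w n,
      ENNReal.ofReal ‖T y‖ ≤ ENNReal.ofReal M * Ynorm p w n y)
    (hcT : ∀ y : ySpace (one_le_two.trans hp.le) w n,
      ENNReal.ofReal c * Ynorm p w n y ≤ ENNReal.ofReal ‖T y‖) :
    max 1 ((n : ℝ) ^ (1 / q) / (2 * C)) ≤ M / c := by
  have hcM : c ≤ M := le_of_Ynorm_bounds _ hw hc hM hcT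
  obtain ⟨x, hx, hsum⟩ := exists_Ynorm_eq_one_and_sum_units_smul_le_two hp hw hw0 n
  let y (k : Fin n) : ySpace (one_le_two.trans hp.le) w n :=
    ⟨x k, (hx k).trans_lt ENNReal.one_lt_top⟩
  have hlower (k : Fin n) : c ≤ ‖T (y k)‖ := by
    have hk := hcT (y k)
    rwa [hx k, mul_one, ENNReal.ofReal_le_ofReal_iff (norm_nonneg _)] at hk
  have hupper (ε : Fin n → ℤˣ) : ‖∑ k, ε k • T (y k)‖ ≤ M * 2 := by
    have hT : T (∑ k, ε k • y k) = ∑ k, ε k • T (y k) := by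
      simp only [map_sum, Units.smul_def, map_zsmul]
    have hy : ((∑ k, ε k • y k : ySpace (one_le_two.trans hp.le) w n) : BIdx n → ℝ) =
        ∑ k, ε k • x k := by
      simp only [AddSubgroup.val_finsetSum, Units.smul_def, AddSubgroup.coe_zsmul, y]
    have hbound : ENNReal.ofReal ‖T (∑ k, ε k • y k)‖ ≤ ENNReal.ofReal M * 2 :=
      (hM _).trans (by rw [hy]; gcongr; exact hsum ε)
    rwa [hT, ← ENNReal.ofReal_ofNat, ← ENNReal.ofReal_mul (by linarith),
      ENNReal.ofReal_le_ofReal_iff (by linarith)] at hbound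
  have hcotype : (n : ℝ) ^ (1 / q) * c ≤ C * (M * 2) :=
    hE.rpow_mul_le hq hC.le hc.le hlower hupper
  refine max_le ((one_le_div hc).2 hcM) ?_
  rw [div_le_div_iff₀ (by positivity) hc]
  linarith

theorem statement18_general (hp : 2 < p) (hw : IsWeight w) (hw0 : ∀ δ > 0, ∃ m, w m ≤ δ)
    (hE : HasCotype q C E) (hq : 0 < q) (hC : 0 < C) :
    ∃ K : ℕ → ℝ, (∀ n, 0 < K n) ∧ Tendsto K atTop atTop ∧
      ∀ (n : ℕ) (T : (BIdx n → ℝ) → E) (M c : ℝ), 0 < c →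
        (∀ x y, Ynorm p w n x < ⊤ → Ynorm p w n y < ⊤ → T (x + y) = T x + T y) →
        (∀ x, Ynorm p w n x < ⊤ →
          ENNReal.ofReal ‖T x‖ ≤ ENNReal.ofReal M * Ynorm p w n x) →
        (∀ x, Ynorm p w n x < ⊤ →
          ENNReal.ofReal c * Ynorm p w n x ≤ ENNReal.ofReal ‖T x‖) →
        K n ≤ M / c := by
  -- The maximum with `1` makes `K 0` positive.
  refine ⟨fun n => max 1 ((n : ℝ) ^ (1 / q) / (2 * C)), fun n => by positivity, ?_, ?_⟩
  · refine tendsto_atTop_mono (fun n => le_max_right _ _) ?_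
    exact ((tendsto_rpow_atTop (one_div_pos.2 hq)).comp
      tendsto_natCast_atTop_atTop).atTop_div_const (by positivity)
  · intro n T M c hc hadd hM hcT
    let T' : ySpace (one_le_two.trans hp.le) w n →+ E :=
      AddMonoidHom.mk' (fun y => T y) fun y z => hadd y z y.2 z.2
    exact max_one_rpow_div_le_div hp hw hw0 hE hq hC hc T' (fun y => hM y y.2) fun y => hcT y y.2

end Distortion

/-- The distance from `Y_n` to any subspace of `L_p` goes to infinity
with `n`: there are positive reals `K n → ∞` such that whenever `T : Y_n → L_p([0,1])`
is linear, bounded by `M`, and bounded below by `c > 0`, one has `M / c ≥ K n`. -/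
theorem statement18 (p : ℝ) (hp : 2 < p) [Fact (1 ≤ ENNReal.ofReal p)]
    (w : ℕ → ℝ) (hw : IsWeight w)
    (hw0 : Filter.Tendsto w Filter.atTop (nhds 0)) :
    ∃ K : ℕ → ℝ, (∀ n, 0 < K n) ∧ Filter.Tendsto K Filter.atTop Filter.atTop ∧
      ∀ (n : ℕ)
        (T : (BIdx n → ℝ) → MeasureTheory.Lp ℝ (ENNReal.ofReal p)
          (volume : Measure ↥(Set.Icc (0 : ℝ) 1)))
        (M c : ℝ), 0 < c →
        (∀ x y, Ynorm p w n x < ⊤ → Ynorm p w n y < ⊤ → T (x + y) = T x + T y) →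
        (∀ (r : ℝ) (x), Ynorm p w n x < ⊤ → T (r • x) = r • T x) →
        (∀ x, Ynorm p w n x < ⊤ →
          ENNReal.ofReal ‖T x‖ ≤ ENNReal.ofReal M * Ynorm p w n x) →
        (∀ x, Ynorm p w n x < ⊤ →
          ENNReal.ofReal c * Ynorm p w n x ≤ ENNReal.ofReal ‖T x‖) →
        K n ≤ M / c := by
  obtain ⟨K, hKpos, hKtop, hK⟩ := statement18_general hp hw
    (fun δ hδ => (hw0.eventually_le_const hδ).exists)
    (hasCotype_Lp (μ := (volume : Measure (Set.Icc (0 : ℝ) 1))) (H := ℝ) hp.le)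
    (by linarith) one_pos
  exact ⟨K, hKpos, hKtop, fun n T M c hc hadd _ hM hcT => hK n T M c hc hadd hM hcT⟩
end
end
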